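/- Let W ⊂ B(H) be a continuous von Neumann algebra, e ∈ W a projection, and J a conjugation on H. Then the TRO eW ⊕ W^t e^t = {(ex, y^t e^t) : x,y ∈ W} ⊂ B(H ⊕ H), together with the map α : eW → eW ⊕ W^t e^t given by α(x) = (x, x^t), is a universal enveloping TRO of the JC*-triple eW; that is, T*(eW) = eW ⊕ W^t e^t. -/

import Mathlib

open ContinuousLinearMap

noncomputable section

/-- The ternary product `x y* z` of bounded operators in `B(K,H)`. -/
def tri {K H : Type} [NormedAddCommGroup K] [InnerProductSpace ℂ K] [CompleteSpace K]
    [NormedAddCommGroup H] [InnerProductSpace ℂ H] [CompleteSpace H]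
    (x y z : K →L[ℂ] H) : K →L[ℂ] H := x ∘L (adjoint y) ∘L z

/-- The Jordan triple product `{x,y,z} = (x y* z + z y* x)/2`. -/
def jtri {K H : Type} [NormedAddCommGroup K] [InnerProductSpace ℂ K] [CompleteSpace K]
    [NormedAddCommGroup H] [InnerProductSpace ℂ H] [CompleteSpace H]
    (x y z : K →L[ℂ] H) : K →L[ℂ] H := (2 : ℂ)⁻¹ • (tri x y z + tri z y x)

/-- A TRO: a norm-closed subspace of `B(K,H)` closed under `x y* z`. -/
def IsTRO {K H : Type} [NormedAddCommGroup K] [InnerProductSpace ℂ K] [CompleteSpace K]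
    [NormedAddCommGroup H] [InnerProductSpace ℂ H] [CompleteSpace H]
    (T : Submodule ℂ (K →L[ℂ] H)) : Prop :=
  IsClosed (T : Set (K →L[ℂ] H)) ∧ ∀ x ∈ T, ∀ y ∈ T, ∀ z ∈ T, tri x y z ∈ T

variable {H : Type} [NormedAddCommGroup H] [InnerProductSpace ℂ H] [CompleteSpace H]

/-- A von Neumann algebra is continuous if it contains no nonzero abelian projection. -/
def IsContinuousVNA (W : VonNeumannAlgebra H) : Prop :=
  ∀ q : H →L[ℂ] H, q ∈ W → IsSelfAdjoint q → q * q = q →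
    (∀ x ∈ W, ∀ y ∈ W, (q * x * q) * (q * y * q) = (q * y * q) * (q * x * q)) → q = 0

/-- A von Neumann algebra `W`, regarded as a subspace of `B(H)`. -/
def vnSubmodule (W : VonNeumannAlgebra H) : Submodule ℂ (H →L[ℂ] H) :=
  Subalgebra.toSubmodule W.toStarSubalgebra.toSubalgebra

/-- The JC*-triple (indeed TRO) `eW = {e x : x ∈ W}`. -/
def corner (W : VonNeumannAlgebra H) (e : H →L[ℂ] H) : Submodule ℂ (H →L[ℂ] H) :=
  (vnSubmodule W).map (LinearMap.mulLeft ℂ e)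

/-- The transpose `x^t = J x* J` with respect to a conjugation `J`. -/
def transp (J : H ≃ₗᵢ⋆[ℂ] H) (x : H →L[ℂ] H) : H →L[ℂ] H where
  toFun h := J (adjoint x (J h))
  map_add' h₁ h₂ := by simp
  map_smul' c h := by simp [map_smulₛₗ]
  cont := J.continuous.comp ((adjoint x).continuous.comp J.continuous)

/-- Transposition as a linear map on `B(H)`. -/
def transpL (J : H ≃ₗᵢ⋆[ℂ] H) : (H →L[ℂ] H) →ₗ[ℂ] (H →L[ℂ] H) where
  toFun := transp J
  map_add' x y := by ext h; simp [transp]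
  map_smul' c x := by ext h; simp [transp, map_smulₛₗ]

/-- The TRO `W^t e^t = {y^t e^t : y ∈ W}`. -/
def cornerT (W : VonNeumannAlgebra H) (e : H →L[ℂ] H) (J : H ≃ₗᵢ⋆[ℂ] H) :
    Submodule ℂ (H →L[ℂ] H) :=
  (vnSubmodule W).map ((LinearMap.mulRight ℂ (transp J e)).comp (transpL J))

/-- The TRO `eW ⊕ W^t e^t`, realized with componentwise ternary product (equivalently,
acting diagonally on `H ⊕ H`). -/
def envTRO (W : VonNeumannAlgebra H) (e : H →L[ℂ] H) (J : H ≃ₗᵢ⋆[ℂ] H) :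
    Submodule ℂ ((H →L[ℂ] H) × (H →L[ℂ] H)) :=
  (corner W e).prod (cornerT W e J)

/-- The componentwise ternary product on `B(H) × B(H)` (the ternary product of the
diagonal action on `H ⊕ H`). -/
def ptri (a b c : (H →L[ℂ] H) × (H →L[ℂ] H)) : (H →L[ℂ] H) × (H →L[ℂ] H) :=
  (tri a.1 b.1 c.1, tri a.2 b.2 c.2)

/-- The map `α : eW → eW ⊕ W^t e^t`, `α x = (x, x^t)`. -/
def envMap (W : VonNeumannAlgebra H) (e : H →L[ℂ] H) (J : H ≃ₗᵢ⋆[ℂ] H) :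
    ↥(corner W e) →ₗ[ℂ] (H →L[ℂ] H) × (H →L[ℂ] H) :=
  ((corner W e).subtype).prod ((transpL J).comp (corner W e).subtype)

/-! ### Part I: the algebra of triple homomorphisms with a halving partial isometry -/

section HalvingAlgebra

/-- `f = w w*`, `g = w* w`, `v = w*` behave like two-by-two matrix units. -/
structure HalfUnits {D : Type*} [Ring D] [StarRing D] (f g w v : D) : Prop where
  sf : star f = f
  sg : star g = g
  sw : star w = v
  sv : star v = w
  ff : f * f = f
  gg : g * g = g
  fg : f * g = 0
  gf : g * f = 0
  fw : f * w = w
  wg : w * g = w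
  wf : w * f = 0
  gw : g * w = 0
  gv : g * v = v
  vf : v * f = v
  fv : f * v = 0
  vg : v * g = 0
  ww : w * w = 0
  vv : v * v = 0
  wv : w * v = f
  vw : v * w = g

theorem reassoc_mul {D : Type*} [Ring D] {a b c : D} (h : a * b = c) (t : D) :
    a * (b * t) = c * t := by rw [← mul_assoc, h]

/-- A triple homomorphism on the elements `x` with `(f + g) x = x`. -/
structure HalfHom {D R : Type*} [Ring D] [StarRing D] [Ring R] [StarRing R]
    (f g w v : D) (φ : D →+ R) : Prop where
  units : HalfUnits f g w v
  two : ∀ r : R, r + r = 0 → r = 0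
  jord : ∀ x y z : D, f * x + g * x = x → f * y + g * y = y → f * z + g * z = z →
    φ (x * (star y * z) + z * (star y * x)) =
      φ x * (star (φ y) * φ z) + φ z * (star (φ y) * φ x)

variable {D R : Type*} [Ring D] [StarRing D] [Ring R] [StarRing R]
variable {f g w v : D} {φ : D →+ R}

theorem HalfUnits.swap (h : HalfUnits f g w v) : HalfUnits g f v w :=
  ⟨h.sg, h.sf, h.sv, h.sw, h.gg, h.ff, h.gf, h.fg, h.gv, h.vf, h.vg, h.fv, h.fw, h.wg,
    h.gw, h.wf, h.vv, h.ww, h.vw, h.wv⟩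

theorem HalfHom.swap (h : HalfHom f g w v φ) : HalfHom g f v w φ :=
  ⟨h.units.swap, h.two, fun x y z hx hy hz => h.jord x y z (by rw [add_comm]; exact hx)
    (by rw [add_comm]; exact hy) (by rw [add_comm]; exact hz)⟩

theorem HalfHom.op (h : HalfHom f g w v φ) :
    HalfHom f g w v ((MulOpposite.opAddEquiv (α := R)).toAddMonoidHom.comp φ) := by
  refine ⟨h.units, fun r hr => ?_, fun x y z hx hy hz => ?_⟩
  · have := h.two r.unop (by rw [← MulOpposite.unop_add, hr]; rfl)
    exact MulOpposite.unop_injective this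
  · have := h.jord x y z hx hy hz
    simp only [AddMonoidHom.coe_comp, Function.comp_apply, this]
    apply MulOpposite.unop_injective
    simp [mul_assoc]
    abel

namespace HalfHom

theorem dbl (h : HalfHom f g w v φ) {a b : R} (hab : a + a = b + b) : a = b := by
  have := h.two (a - b) (by rw [sub_add_sub_comm, hab, sub_self])
  exact sub_eq_zero.mp this

theorem ef (h : HalfHom f g w v φ) : f * f + g * f = f := by
  rw [h.units.ff, h.units.gf, add_zero]
theorem eg (h : HalfHom f g w v φ) : f * g + g * g = g := by
  rw [h.units.fg, h.units.gg, zero_add]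
theorem ew (h : HalfHom f g w v φ) : f * w + g * w = w := by
  rw [h.units.fw, h.units.gw, add_zero]
theorem ev (h : HalfHom f g w v φ) : f * v + g * v = v := by
  rw [h.units.fv, h.units.gv, zero_add]

theorem e_fmul (h : HalfHom f g w v φ) (x : D) : f * (f * x) + g * (f * x) = f * x := by
  rw [reassoc_mul h.units.ff, reassoc_mul h.units.gf, zero_mul, add_zero]
theorem e_gmul (h : HalfHom f g w v φ) (x : D) : f * (g * x) + g * (g * x) = g * x := by
  rw [reassoc_mul h.units.fg, reassoc_mul h.units.gg, zero_mul, zero_add]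
theorem e_wmul (h : HalfHom f g w v φ) (x : D) : f * (w * x) + g * (w * x) = w * x := by
  rw [reassoc_mul h.units.fw, reassoc_mul h.units.gw, zero_mul, add_zero]
theorem e_vmul (h : HalfHom f g w v φ) (x : D) : f * (v * x) + g * (v * x) = v * x := by
  rw [reassoc_mul h.units.fv, reassoc_mul h.units.gv, zero_mul, zero_add]

/-- The quadratic form of the triple law. -/
theorem quad (h : HalfHom f g w v φ) (x y : D) (hx : f * x + g * x = x)
    (hy : f * y + g * y = y) :
    φ (x * (star y * x)) = φ x * (star (φ y) * φ x) := by
  have := h.jord x y x hx hy hx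
  rw [map_add] at this
  exact h.dbl this

theorem FFF (h : HalfHom f g w v φ) : φ f * (star (φ f) * φ f) = φ f := by
  have := h.quad f f h.ef h.ef
  rw [h.units.sf, h.units.ff, h.units.ff] at this
  exact this.symm

theorem VVV (h : HalfHom f g w v φ) : φ w * (star (φ w) * φ w) = φ w := by
  have := h.quad w w h.ew h.ew
  rw [h.units.sw, h.units.vw, h.units.wg] at this
  exact this.symm

theorem FFFs (h : HalfHom f g w v φ) : star (φ f) * (φ f * star (φ f)) = star (φ f) := by
  have := congrArg star h.FFF
  simpa [mul_assoc] using this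

theorem FsG (h : HalfHom f g w v φ) : star (φ f) * φ g = 0 := by
  have := h.jord f f g h.ef h.ef h.eg
  rw [h.units.sf, h.units.fg, h.units.ff, h.units.gf, mul_zero, add_zero, map_zero] at this
  have h1 := congrArg (fun t => star (φ f) * t * star (φ f)) this
  simp only [mul_add, add_mul, mul_assoc, mul_zero, zero_mul] at h1
  have e1 := h.FFFs
  have e2 : star (φ f) * (φ f * (star (φ f) * (φ g * star (φ f)))) =
      star (φ f) * (φ g * star (φ f)) := by
    rw [← mul_assoc (φ f), ← mul_assoc (star (φ f)), e1]
  rw [e2, e1] at h1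
  have h2 := h.two _ h1.symm
  have h3 := congrArg (fun t => star (φ f) * t) this
  simp only [mul_add, mul_zero] at h3
  have e3 : star (φ f) * (φ f * (star (φ f) * φ g)) = star (φ f) * φ g := by
    rw [← mul_assoc (φ f), ← mul_assoc (star (φ f)), e1]
  have e4 : star (φ f) * (φ g * (star (φ f) * φ f)) = 0 := by
    have := congrArg (fun t => t * φ f) h2
    simpa [mul_assoc] using this
  rw [e3, e4, add_zero] at h3
  exact h3.symm

theorem GFs (h : HalfHom f g w v φ) : φ g * star (φ f) = 0 := by
  have := h.op.FsG
  have := congrArg MulOpposite.unop this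
  simpa using this

theorem GsF (h : HalfHom f g w v φ) : star (φ g) * φ f = 0 := h.swap.FsG
theorem FGs (h : HalfHom f g w v φ) : φ f * star (φ g) = 0 := h.swap.GFs

theorem V_F (h : HalfHom f g w v φ) :
    φ f * (star (φ f) * φ w) + φ w * (star (φ f) * φ f) = φ w := by
  have := h.jord f f w h.ef h.ef h.ew
  rw [h.units.sf, h.units.fw, h.units.fw, h.units.ff, h.units.wf, add_zero] at this
  exact this.symm

theorem V_G (h : HalfHom f g w v φ) :
    φ g * (star (φ g) * φ w) + φ w * (star (φ g) * φ g) = φ w := by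
  have := h.jord g g w h.eg h.eg h.ew
  rw [h.units.sg, h.units.gw, mul_zero, h.units.gg, h.units.wg, zero_add] at this
  exact this.symm

theorem U_eq (h : HalfHom f g w v φ) :
    φ v = φ f * (star (φ w) * φ g) + φ g * (star (φ w) * φ f) := by
  have := h.jord f w g h.ef h.ew h.eg
  rw [h.units.sw, h.units.vg, mul_zero, h.units.vf, h.units.gv, zero_add] at this
  exact this

/-- `F U* = V G*`. -/
theorem FUs (h : HalfHom f g w v φ) : φ f * star (φ v) = φ w * star (φ g) := by
  have e1 := h.swap.U_eq
  have e2 := congrArg star h.swap.V_F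
  simp only [star_add, star_mul, star_star, mul_assoc] at e2
  have e3 := congrArg (fun t => φ f * t) e2
  simp only [mul_add] at e3
  rw [reassoc_mul h.FGs, zero_mul, add_zero] at e3
  rw [e1, add_mul, mul_assoc, mul_assoc, h.FGs, mul_zero, mul_zero, zero_add, ← e3, mul_assoc,
    mul_assoc]

theorem UsF (h : HalfHom f g w v φ) : star (φ v) * φ f = star (φ g) * φ w := by
  have := congrArg MulOpposite.unop h.op.FUs
  simpa using this

theorem map_w (h : HalfHom f g w v φ) (x : D) (hx : f * x + g * x = x) :
    φ (w * x) = φ f * star (φ v) * φ x + φ x * (star (φ v) * φ f) := by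
  have := h.jord f v x h.ef h.ev hx
  rw [h.units.sv, h.units.wf, mul_zero, reassoc_mul h.units.fw, add_zero] at this
  rw [this, mul_assoc]

theorem AxA (h : HalfHom f g w v φ) (x : D) (hx : f * x + g * x = x) :
    φ f * (star (φ v) * (φ x * (star (φ v) * φ f))) = 0 := by
  have e1 := congrArg star (h.quad v x h.ev hx)
  have e2 := h.quad f (v * (star x * v)) h.ef (h.e_vmul _)
  simp only [star_mul, star_star, mul_assoc, h.units.sv, h.units.wf, mul_zero, map_zero] at e1 e2
  rw [← star_star (φ (v * (star x * v))), e1] at e2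
  simpa [mul_assoc] using e2.symm

theorem FFFt (h : HalfHom f g w v φ) (t : R) :
    φ f * (star (φ f) * (φ f * t)) = φ f * t := by
  conv_rhs => rw [← h.FFF]
  simp only [mul_assoc]

theorem FVF (h : HalfHom f g w v φ) : φ f * (star (φ f) * (φ w * star (φ f))) = 0 := by
  have e := congrArg (fun t => φ f * (star (φ f) * (t * star (φ f)))) h.V_F
  simp only [mul_add, add_mul, mul_assoc] at e
  rw [h.FFFs, h.FFFt] at e
  simpa using e

theorem VuV (h : HalfHom f g w v φ) :
    φ w * (star (φ f) * φ w) + φ w * (star (φ g) * φ w) = 0 := by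
  have e1 := h.quad w f h.ew h.ef
  have e2 := h.quad w g h.ew h.eg
  rw [h.units.sf, h.units.fw, h.units.ww, map_zero] at e1
  rw [h.units.sg, h.units.gw, mul_zero, map_zero] at e2
  rw [← e1, ← e2, add_zero]

theorem FsVFs (h : HalfHom f g w v φ) : star (φ f) * (φ w * star (φ f)) = 0 := by
  have e := congrArg (fun t => star (φ f) * t) h.FVF
  simp only [mul_zero] at e
  rw [← h.FFFs, ← e]
  simp only [mul_assoc]
  rw [h.FFFs]

theorem GVGt (h : HalfHom f g w v φ) : star (φ g) * (φ w * star (φ g)) = 0 := by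
  have e := congrArg (fun t => star (φ g) * (t * star (φ g))) h.V_G
  simp only [mul_add, add_mul, mul_assoc] at e
  have e1 := h.swap.FFFs
  rw [e1] at e
  have e2 : star (φ g) * (φ g * (star (φ g) * (φ w * star (φ g)))) =
      star (φ g) * (φ w * star (φ g)) := by
    conv_rhs => rw [← e1]
    simp only [mul_assoc]
    rw [e1]
  rw [e2] at e
  simpa using e

theorem GsVFsV (h : HalfHom f g w v φ) : star (φ g) * (φ w * (star (φ f) * φ w)) = 0 := by
  have e := congrArg (fun t => star (φ g) * t) h.VuV
  simp only [mul_add, mul_zero] at e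
  have e1 := congrArg (fun t => t * φ w) h.GVGt
  simp only [mul_assoc, zero_mul] at e1
  rw [e1, add_zero] at e
  exact e

end HalfHom

theorem proj_fix {Q P Y : R} (two : ∀ r : R, r + r = 0 → r = 0) (hQ : Q * Q = Q) (hP : P * P = P)
    (hY : Y + Y = Q * Y + Y * P) : Q * Y = Y ∧ Y * P = Y := by
  have e1 := congrArg (fun t => Q * t) hY
  have e2 := congrArg (fun t => t * P) hY
  simp only [mul_add, add_mul] at e1 e2
  rw [← mul_assoc Q Q, hQ, ← mul_assoc] at e1
  rw [mul_assoc Y P P, hP] at e2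
  have e1' := add_left_cancel e1
  have e2' := add_right_cancel e2
  have e3 : Q * Y = Y * P := by rw [e1', ← e2']
  have e4 : Q * Y = Y := by
    have : (Q * Y - Y) + (Q * Y - Y) = 0 := by
      rw [sub_add_sub_comm, hY, ← e3, sub_self]
    exact sub_eq_zero.mp (two _ this)
  exact ⟨e4, e3 ▸ e4⟩

theorem corner_idem {F T : R} (hF : F * (star F * F) = F)
    (hTF : F * (star F * T) + T * (star F * F) = T) (hT : T * (star T * T) = T) :
    F * (star F * (T * (star T * (F * star F)))) = F * (star F * (T * star T)) ∧
    (F * (star F * (T * star T))) * (F * (star F * (T * star T))) =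
      F * (star F * (T * star T)) := by
  have hFs : star F * (F * star F) = star F := by
    simpa [mul_assoc] using congrArg star hF
  have hFt : ∀ t, F * (star F * (F * t)) = F * t := fun t => by
    conv_rhs => rw [← hF]
    simp only [mul_assoc]
  have hFTF : F * (star F * (T * star F)) = 0 := by
    have e := congrArg (fun t => F * (star F * (t * star F))) hTF
    simp only [mul_add, add_mul, mul_assoc] at e
    rw [hFs, hFt] at e
    simpa using e
  have e1 := congrArg star hTF
  simp only [star_add, star_mul, star_star, mul_assoc] at e1
  have hq : F * (star F * (T * (star T * (F * star F)))) = F * (star F * (T * star T)) := by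
    conv_rhs => rw [← e1]
    simp only [mul_add]
    have := congrArg (fun t => t * (F * star T)) hFTF
    simp only [mul_assoc, zero_mul] at this
    rw [this, add_zero]
  refine ⟨hq, ?_⟩
  have e2 := congrArg (fun t => t * (T * star T)) hq
  simp only [mul_assoc] at e2 ⊢
  rw [e2]
  have e3 := congrArg (fun t => t * star T) hT
  simp only [mul_assoc] at e3
  rw [e3]

theorem corner_fix {F G T Y : R} (two : ∀ r : R, r + r = 0 → r = 0)
    (hF : F * (star F * F) = F) (hG : G * (star G * G) = G)
    (hTF : F * (star F * T) + T * (star F * F) = T)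
    (hTG : G * (star G * T) + T * (star G * G) = T) (hT : T * (star T * T) = T)
    (hY : Y + Y = T * (star T * Y) + Y * (star T * T)) :
    F * (star F * (T * (star T * (F * (star F * (Y * (star G * G))))))) =
      F * (star F * (Y * (star G * G))) ∧
    F * (star F * (Y * (star G * (G * (star T * (T * (star G * G))))))) =
      F * (star F * (Y * (star G * G))) := by
  have A := corner_idem hF hTF hT
  have B := corner_idem (R := Rᵐᵒᵖ) (F := MulOpposite.op G) (T := MulOpposite.op T)
    (by rw [← MulOpposite.op_star, ← MulOpposite.op_mul, ← MulOpposite.op_mul, mul_assoc, hG])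
    (by
      simp only [← MulOpposite.op_star, ← MulOpposite.op_mul, ← MulOpposite.op_add]
      rw [mul_assoc, mul_assoc, add_comm, hTG])
    (by rw [← MulOpposite.op_star, ← MulOpposite.op_mul, ← MulOpposite.op_mul, mul_assoc, hT])
  obtain ⟨B1, B2⟩ := B
  replace B1 := congrArg MulOpposite.unop B1
  replace B2 := congrArg MulOpposite.unop B2
  simp only [MulOpposite.unop_mul, MulOpposite.unop_star, MulOpposite.unop_op] at B1 B2
  obtain ⟨A1, A2⟩ := A
  have key := proj_fix (Q := F * (star F * (T * star T))) (P := star T * T * star G * G)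
    (Y := F * (star F * (Y * (star G * G)))) two A2 (by simpa only [mul_assoc] using B2) (by
      have e := congrArg (fun t => F * (star F * (t * (star G * G)))) hY
      simp only [mul_add, add_mul, mul_assoc] at e ⊢
      rw [e]
      have a := congrArg (fun t => t * (Y * (star G * G))) A1
      have b := congrArg (fun t => F * (star F * (Y * t))) B1
      simp only [mul_assoc] at a b
      rw [a, b])
  simpa only [mul_assoc] using key

namespace HalfHom

/-- `U* y₁ = 0` for the `F`-`G` corner `y₁` of the image of `y = f y g`. -/
theorem h1 (h : HalfHom f g w v φ) (y : D) (hy1 : f * y = y) (hy2 : y * g = y) :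
    star (φ v) * (φ f * (star (φ f) * (φ y * (star (φ g) * φ g)))) = 0 := by
  have ey : f * y + g * y = y := by
    rw [← hy1, h.e_fmul]
  have hY : φ y + φ y = φ w * (star (φ w) * φ y) + φ y * (star (φ w) * φ w) := by
    rw [← h.jord w w y h.ew h.ew ey, h.units.sw, ← mul_assoc, h.units.wv, h.units.vw, hy1, hy2,
      map_add]
  have e := (corner_fix h.two h.FFF h.swap.FFF h.V_F h.V_G h.VVV hY).1
  rw [← e, ← mul_assoc, h.UsF]
  have e2 := congrArg (fun t => t * (star (φ w) *
    (φ f * (star (φ f) * (φ y * (star (φ g) * φ g)))))) h.GsVFsV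
  simpa only [mul_assoc, zero_mul] using e2

/-- `y₁ V* F = 0` for the `F`-`G` corner `y₁` of the image of `y = g y f`. -/
theorem h2 (h : HalfHom f g w v φ) (y : D) (hy1 : g * y = y) (hy2 : y * f = y) :
    φ f * (star (φ f) * (φ y * (star (φ g) * (φ g * star (φ w))))) = 0 := by
  have ey : f * y + g * y = y := by
    rw [← hy1, h.e_gmul]
  have hY : φ y + φ y = φ v * (star (φ v) * φ y) + φ y * (star (φ v) * φ v) := by
    rw [← h.jord v v y h.ev h.ev ey, h.units.sv, ← mul_assoc, h.units.vw, h.units.wv, hy1, hy2,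
      map_add]
  have e := (corner_fix h.two h.FFF h.swap.FFF h.swap.V_G h.swap.V_F h.swap.VVV hY).2
  have e3 : φ v * (star (φ g) * (φ g * star (φ w))) = 0 := by
    rw [h.swap.FUs]
    have e1 := congrArg (fun t => t * star (φ f)) h.swap.VuV
    simp only [add_mul, mul_assoc, zero_mul] at e1
    rw [h.swap.GVGt, mul_zero, add_zero] at e1
    exact e1
  have e4 := congrArg (fun t => t * star (φ w)) e
  simp only [mul_assoc] at e4
  rw [← e4, e3]
  simp only [mul_zero]

theorem AxB (h : HalfHom f g w v φ) (x : D) (hx : f * x + g * x = x) :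
    φ f * (star (φ v) * (φ x * (star (φ w) * φ g))) = 0 := by
  -- the two off-diagonal pieces of `x*`
  have k1 := h.h1 (f * (star x * g)) (by rw [reassoc_mul h.units.ff])
    (by rw [mul_assoc, mul_assoc, h.units.gg])
  have k2 := h.h2 (g * (star x * f)) (by rw [reassoc_mul h.units.gg])
    (by rw [mul_assoc, mul_assoc, h.units.ff])
  have k3 := h.jord g x f h.eg hx h.ef
  rw [map_add] at k3
  set Y1 := φ (f * (star x * g)) with hY1
  set Y2 := φ (g * (star x * f)) with hY2
  -- reduce to `F F* V (G* x F*) U G* G`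
  have k4 := congrArg star k3
  simp only [star_add, star_mul, star_star, mul_assoc] at k4
  have s1 := congrArg star k1
  have s2 := congrArg star k2
  simp only [star_mul, star_star, mul_assoc, star_zero] at s1 s2
  have k5 : star (φ g) * (φ x * star (φ f)) =
      star (φ g) * (φ g * (star Y1 * (φ f * star (φ f)))) +
      star (φ g) * (φ g * (star Y2 * (φ f * star (φ f)))) := by
    have := congrArg (fun t => star (φ g) * (φ g * (t * (φ f * star (φ f))))) k4
    simp only [mul_add, add_mul, mul_assoc] at this
    rw [reassoc_mul h.GFs, h.FFFs, reassoc_mul h.GsF] at this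
    simp only [zero_mul, mul_zero, add_zero, zero_add] at this
    have e1 : star (φ g) * (φ g * (star (φ g) * (φ x * star (φ f)))) =
        star (φ g) * (φ x * star (φ f)) := by
      rw [← mul_assoc (φ g), ← mul_assoc (star (φ g)), h.swap.FFFs]
    rw [e1] at this
    rw [← this, add_comm]
  have k6 : φ f * (star (φ v) * (φ x * (star (φ w) * φ g))) =
      φ w * ((star (φ g) * (φ x * star (φ f))) * φ v) := by
    rw [← mul_assoc (φ f), h.FUs, h.swap.UsF]
    simp only [mul_assoc]
  rw [k6, k5, add_mul, mul_add]
  have e1 : star (φ g) * (φ g * (star Y1 * (φ f * star (φ f)))) * φ v = 0 := by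
    simpa only [mul_assoc] using s1
  have e2 : φ w * (star (φ g) * (φ g * (star Y2 * (φ f * star (φ f)))) * φ v) = 0 := by
    have := congrArg (fun t => t * φ v) s2
    simpa only [mul_assoc, zero_mul] using this
  rw [e1, e2, mul_zero, add_zero]

/-- The projection cutting out the homomorphic part. -/
def Z (f g w v : D) (φ : D →+ R) : R :=
  φ f * star (φ v) * (φ g * star (φ w)) + φ g * star (φ w) * (φ f * star (φ v))

/-- The right-hand projection cutting out the antihomomorphic part. -/
def Zo (f g w v : D) (φ : D →+ R) : R :=
  star (φ w) * φ g * (star (φ v) * φ f) + star (φ v) * φ f * (star (φ w) * φ g)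

theorem split (h : HalfHom f g w v φ) (x : D) (hx : f * x + g * x = x) :
    φ x = Z f g w v φ * φ x + φ x * Zo f g w v φ := by
  have e1 := h.map_w (v * x) (h.e_vmul x)
  have e2 := h.swap.map_w (w * x) (by rw [add_comm]; exact h.e_wmul x)
  have e3 := h.map_w x hx
  have e4 := h.swap.map_w x (by rw [add_comm]; exact hx)
  have a := h.AxB x hx
  have b := h.swap.AxB x (by rw [add_comm]; exact hx)
  rw [reassoc_mul h.units.wv] at e1
  rw [reassoc_mul h.units.vw] at e2
  have e5 : φ x = φ (f * x) + φ (g * x) := by rw [← map_add, hx]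
  refine e5.trans ?_
  rw [e1, e2, e3, e4]
  simp only [Z, Zo, mul_add, add_mul, mul_assoc, a, b]
  abel

theorem ZxZo (h : HalfHom f g w v φ) (x : D) (hx : f * x + g * x = x) :
    Z f g w v φ * φ x * Zo f g w v φ = 0 := by
  have a := h.AxB x hx
  have hx' : g * x + f * x = x := by rw [add_comm]; exact hx
  have b := h.swap.AxB x hx'
  have c := h.AxA x hx
  have d := h.swap.AxA x hx'
  have a' := fun t => congrArg (fun s => s * t) a
  have b' := fun t => congrArg (fun s => s * t) b
  have c' := fun t => congrArg (fun s => s * t) c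
  have d' := fun t => congrArg (fun s => s * t) d
  simp only [mul_assoc, zero_mul] at a' b' c' d'
  simp only [Z, Zo, mul_add, add_mul, mul_assoc, a', b', c', d', mul_zero, add_zero]

theorem Z_star (h : HalfHom f g w v φ) : star (Z f g w v φ) = Z f g w v φ := by
  have e1 : star (φ f * star (φ v)) = φ g * star (φ w) := by
    rw [h.FUs, star_mul, star_star]
  have e2 : star (φ g * star (φ w)) = φ f * star (φ v) := by
    rw [← e1, star_star]
  simp only [Z, star_add, star_mul _ (φ g * star (φ w)), star_mul _ (φ f * star (φ v)), e1, e2]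

theorem Zo_eq (h : HalfHom f g w v φ) :
    Zo f g w v φ = MulOpposite.unop
      (Z f g w v ((MulOpposite.opAddEquiv (α := R)).toAddMonoidHom.comp φ)) := by
  simp [Z, Zo]

theorem Zo_star (h : HalfHom f g w v φ) : star (Zo f g w v φ) = Zo f g w v φ := by
  rw [h.Zo_eq, ← MulOpposite.unop_star, h.op.Z_star]

theorem ZZx (h : HalfHom f g w v φ) (x : D) (hx : f * x + g * x = x) :
    Z f g w v φ * (Z f g w v φ * φ x) = Z f g w v φ * φ x := by
  have := congrArg (fun t => Z f g w v φ * t) (h.split x hx)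
  simp only [mul_add] at this
  rw [← mul_assoc _ (φ x), h.ZxZo x hx, add_zero] at this
  exact this.symm

theorem Z_idem (h : HalfHom f g w v φ) : Z f g w v φ * Z f g w v φ = Z f g w v φ := by
  have e1 : Z f g w v φ * (φ f * star (φ f) + φ g * star (φ g)) = Z f g w v φ := by
    have a : φ g * star (φ w) * (φ f * star (φ f)) = φ g * star (φ w) := by
      rw [h.swap.FUs, mul_assoc, h.FFFs]
    have b : φ f * star (φ v) * (φ g * star (φ g)) = φ f * star (φ v) := by
      rw [h.FUs, mul_assoc, h.swap.FFFs]
    have c : φ g * star (φ w) * (φ g * star (φ g)) = 0 := by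
      rw [h.swap.FUs, mul_assoc, reassoc_mul h.FsG, zero_mul, mul_zero]
    have d : φ f * star (φ v) * (φ f * star (φ f)) = 0 := by
      rw [h.FUs, mul_assoc, reassoc_mul h.GsF, zero_mul, mul_zero]
    simp only [Z, mul_add, add_mul, mul_assoc (φ f * star (φ v)), mul_assoc (φ g * star (φ w)),
      a, b, c, d, mul_zero, add_zero, zero_add]
  have e2 : Z f g w v φ * (Z f g w v φ * (φ f * star (φ f) + φ g * star (φ g))) =
      Z f g w v φ * (φ f * star (φ f) + φ g * star (φ g)) := by
    have a := congrArg (fun t => t * star (φ f)) (h.ZZx f h.ef)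
    have b := congrArg (fun t => t * star (φ g)) (h.ZZx g h.eg)
    simp only [mul_assoc] at a b
    simp only [mul_add, a, b]
  rwa [e1] at e2

theorem Z_comm (h : HalfHom f g w v φ) (x y : D) (hx : f * x + g * x = x)
    (hy : f * y + g * y = y) :
    Z f g w v φ * (φ x * star (φ y)) = φ x * star (φ y) * Z f g w v φ := by
  have e1 := h.split x hx
  have e2 := congrArg star (h.split y hy)
  simp only [star_add, star_mul, h.Z_star, h.Zo_star] at e2
  have a := congrArg (fun t => t * star (φ y)) e1
  have b := congrArg (fun t => φ x * t) e2
  simp only [add_mul, mul_add, mul_assoc] at a b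
  rw [mul_assoc]
  have := a.symm.trans b
  exact add_right_cancel this

theorem Z_w (h : HalfHom f g w v φ) (x : D) (hx : f * x + g * x = x) :
    Z f g w v φ * φ (w * x) = φ f * star (φ v) * (Z f g w v φ * φ x) := by
  rw [h.map_w x hx, mul_add, ← mul_assoc, h.Z_comm f v h.ef h.ev]
  have a := congrArg (fun t => (φ f * star (φ v)) * t) (h.AxA x hx)
  have b := congrArg (fun t => (φ g * star (φ w)) * t) (h.AxA x hx)
  have c := congrArg (fun t => (φ f * star (φ v)) * t)
    (h.swap.AxB x (by rw [add_comm]; exact hx))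
  simp only [mul_assoc, mul_zero] at a b c
  have d : Z f g w v φ * (φ x * (star (φ v) * φ f)) = 0 := by
    simp only [Z, add_mul, mul_assoc, b, c, add_zero]
  rw [d, add_zero, mul_assoc]

theorem Z_swap : Z g f v w φ = Z f g w v φ := by
  simp only [Z]; rw [add_comm]

theorem Z_v (h : HalfHom f g w v φ) (x : D) (hx : f * x + g * x = x) :
    Z f g w v φ * φ (v * x) = φ g * star (φ w) * (Z f g w v φ * φ x) := by
  have := h.swap.Z_w x (by rw [add_comm]; exact hx)
  rwa [Z_swap] at this

theorem Z_f (h : HalfHom f g w v φ) (x : D) (hx : f * x + g * x = x) :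
    Z f g w v φ * φ (f * x) =
      φ f * star (φ v) * (φ g * star (φ w) * (Z f g w v φ * φ x)) := by
  have e : f * x = w * (v * x) := by rw [← mul_assoc, h.units.wv]
  rw [e, h.Z_w _ (h.e_vmul x), h.Z_v x hx]

/-- Multiplicativity for `x` in the first row and `z` in the second one. -/
theorem hom_fg (h : HalfHom f g w v φ) (x y z : D) (hx : f * x = x) (hz : g * z = z)
    (hy : f * y + g * y = y) :
    Z f g w v φ * φ (x * (star y * z)) = Z f g w v φ * (φ x * (star (φ y) * φ z)) := by
  have ex : f * x + g * x = x := by rw [← hx, h.e_fmul]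
  have ez : f * z + g * z = z := by rw [← hz, h.e_gmul]
  have j := h.jord x y z ex hy ez
  have ej : f * (x * (star y * z) + z * (star y * x)) + g * (x * (star y * z) + z * (star y * x))
      = x * (star y * z) + z * (star y * x) := by
    have e1 : f * (x * (star y * z)) + g * (x * (star y * z)) = x * (star y * z) := by
      rw [← hx, mul_assoc, h.e_fmul]
    have e2 : f * (z * (star y * x)) + g * (z * (star y * x)) = z * (star y * x) := by
      rw [← hz, mul_assoc, h.e_gmul]
    rw [mul_add, mul_add, add_add_add_comm, e1, e2]
  have k := h.Z_f _ ej
  have e3 : f * (x * (star y * z) + z * (star y * x)) = x * (star y * z) := by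
    rw [mul_add, ← mul_assoc, hx, ← hz, ← mul_assoc f, ← mul_assoc f, h.units.fg]
    simp
  rw [e3, j, mul_add] at k
  have kx := h.Z_f x ex
  have kz := h.Z_f z ez
  rw [hx] at kx
  have fz : f * z = 0 := by rw [← hz, ← mul_assoc, h.units.fg, zero_mul]
  rw [fz, map_zero, mul_zero] at kz
  have kx' := congrArg (fun t => t * (star (φ y) * φ z)) kx
  have kz' := congrArg (fun t => t * (star (φ y) * φ x)) kz
  simp only [mul_assoc, zero_mul] at kx' kz'
  rw [k]
  simp only [mul_add, mul_assoc]
  rw [← kx', ← kz', add_zero]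

theorem hom_ff (h : HalfHom f g w v φ) (x y z : D) (hx : f * x = x) (hz : f * z = z)
    (hy : f * y + g * y = y) :
    Z f g w v φ * φ (x * (star y * z)) = Z f g w v φ * (φ x * (star (φ y) * φ z)) := by
  have ex : f * x + g * x = x := by rw [← hx, h.e_fmul]
  have ez : f * z + g * z = z := by rw [← hz, h.e_fmul]
  have k := h.hom_fg x (v * y) (v * z) hx (by rw [← mul_assoc, h.units.gv]) (h.e_vmul y)
  have e1 : x * (star (v * y) * (v * z)) = x * (star y * z) := by
    rw [star_mul, h.units.sv, mul_assoc, ← mul_assoc w v, h.units.wv, hz]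
  rw [e1] at k
  rw [k]
  have zi := h.Z_idem
  -- move `Z` inside
  have mv : ∀ y z : D, f * y + g * y = y → f * z + g * z = z →
      Z f g w v φ * (φ x * (star (φ y) * φ z)) =
        φ x * (star (Z f g w v φ * φ y) * (Z f g w v φ * φ z)) := by
    intro y z hy hz
    rw [star_mul, h.Z_star, mul_assoc (star (φ y)), reassoc_mul zi,
      ← mul_assoc (φ x), ← mul_assoc, h.Z_comm x y ex hy]
    simp only [mul_assoc]
  rw [mv _ _ (h.e_vmul y) (h.e_vmul z), mv y z hy ez, h.Z_v y hy, h.Z_v z ez]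
  have e2 : star (φ g * star (φ w)) = φ f * star (φ v) := by
    rw [star_mul, star_star, h.FUs]
  have kz := h.Z_f z ez
  rw [hz] at kz
  rw [star_mul (φ g * star (φ w)), e2, mul_assoc (star (Z f g w v φ * φ y)), ← kz]

theorem hom (h : HalfHom f g w v φ) (x y z : D) (hx : f * x + g * x = x)
    (hy : f * y + g * y = y) (hz : f * z + g * z = z) :
    Z f g w v φ * φ (x * (star y * z)) = Z f g w v φ * (φ x * (star (φ y) * φ z)) := by
  have hy' : g * y + f * y = y := by rw [add_comm]; exact hy
  have a1 := h.hom_ff (f * x) y (f * z) (by rw [reassoc_mul h.units.ff])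
    (by rw [reassoc_mul h.units.ff]) hy
  have a2 := h.hom_fg (f * x) y (g * z) (by rw [reassoc_mul h.units.ff])
    (by rw [reassoc_mul h.units.gg]) hy
  have a3 := h.swap.hom_ff (g * x) y (g * z) (by rw [reassoc_mul h.units.gg])
    (by rw [reassoc_mul h.units.gg]) hy'
  have a4 := h.swap.hom_fg (g * x) y (f * z) (by rw [reassoc_mul h.units.gg])
    (by rw [reassoc_mul h.units.ff]) hy'
  rw [Z_swap] at a3 a4
  rw [← hx, ← hz]
  simp only [map_add, mul_add, add_mul, a1, a2, a3, a4]

theorem hom_op (h : HalfHom f g w v φ) (x y z : D) (hx : f * x + g * x = x)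
    (hy : f * y + g * y = y) (hz : f * z + g * z = z) :
    φ (x * (star y * z)) * Zo f g w v φ = φ z * (star (φ y) * φ x) * Zo f g w v φ := by
  have := congrArg MulOpposite.unop (h.op.hom x y z hx hy hz)
  simp only [MulOpposite.unop_mul, ← h.Zo_eq] at this
  simpa [mul_assoc] using this

/-- `(1 - Z) φ` is an anti-homomorphism. -/
theorem antihom (h : HalfHom f g w v φ) (x y z : D) (hx : f * x + g * x = x)
    (hy : f * y + g * y = y) (hz : f * z + g * z = z) :
    (1 - Z f g w v φ) * φ (x * (star y * z)) =
      (1 - Z f g w v φ) * (φ z * (star (φ y) * φ x)) := by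
  have e1 : ∀ x, f * x + g * x = x → (1 - Z f g w v φ) * φ x = φ x * Zo f g w v φ := by
    intro x hx
    have := h.split x hx
    rw [sub_mul, one_mul, sub_eq_iff_eq_add, add_comm]
    exact this
  rw [e1 _ (by rw [← hx, add_mul, mul_add, mul_add, mul_assoc, mul_assoc, add_add_add_comm,
    h.e_fmul, h.e_gmul]), h.hom_op x y z hx hy hz]
  have e2 : (1 - Z f g w v φ) * (φ z * star (φ y)) = φ z * star (φ y) * (1 - Z f g w v φ) := by
    rw [sub_mul, mul_sub, h.Z_comm z y hz hy, one_mul, mul_one]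
  rw [← mul_assoc (φ z), ← mul_assoc (1 - Z f g w v φ), e2, mul_assoc (φ z * star (φ y)) (1 - _),
    e1 x hx, ← mul_assoc]

end HalfHom
end HalvingAlgebra

/-! ### Part II: halving a projection in a continuous von Neumann algebra -/

section Halving

open Filter Topology

/-- Convergence in the weak operator topology. -/
def WLim {ι : Type*} (U : Filter ι) (T : ι → H →L[ℂ] H) (L : H →L[ℂ] H) : Prop :=
  ∀ x y : H, Tendsto (fun i => inner ℂ (T i x) y) U (𝓝 (inner ℂ (L x) y))

namespace WLim

variable {ι : Type*} {U : Filter ι} {T S : ι → H →L[ℂ] H} {L M : H →L[ℂ] H}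

theorem unique [NeBot U] (h₁ : WLim U T L) (h₂ : WLim U T M) : L = M := by
  ext x
  refine ext_inner_right ℂ fun y => ?_
  exact tendsto_nhds_unique (h₁ x y) (h₂ x y)

theorem of_eventually (h : ∀ᶠ i in U, T i = L) : WLim U T L := by
  intro x y
  refine tendsto_const_nhds.congr' ?_
  filter_upwards [h] with i hi
  rw [hi]

theorem congr (h : WLim U T L) (hTS : ∀ i, T i = S i) : WLim U S L := by
  have : T = S := funext hTS
  exact this ▸ h

theorem mul_left (h : WLim U T L) (a : H →L[ℂ] H) : WLim U (fun i => a * T i) (a * L) := by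
  intro x y
  have := h x (adjoint a y)
  simpa [ContinuousLinearMap.adjoint_inner_right] using this

theorem mul_right (h : WLim U T L) (a : H →L[ℂ] H) : WLim U (fun i => T i * a) (L * a) := by
  intro x y
  exact h (a x) y

theorem star_lim (h : WLim U T L) : WLim U (fun i => star (T i)) (star L) := by
  intro x y
  have := (Complex.continuous_conj.tendsto _).comp (h y x)
  simpa [Function.comp_def, ContinuousLinearMap.star_eq_adjoint,
    ContinuousLinearMap.adjoint_inner_left] using this

theorem of_norm (h : Tendsto (fun i => ‖T i - L‖) U (𝓝 0)) : WLim U T L := by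
  intro x y
  have h1 : Tendsto T U (𝓝 L) := tendsto_iff_norm_sub_tendsto_zero.mpr h
  have h2 : Continuous fun A : H →L[ℂ] H => inner ℂ (A x) y := by fun_prop
  exact (h2.tendsto L).comp h1

theorem comm [NeBot U] (h : WLim U T L) (y : H →L[ℂ] H) (hy : ∀ i, y * T i = T i * y) :
    y * L = L * y :=
  (h.mul_left y).unique ((h.mul_right y).congr fun i => (hy i).symm)

theorem exists_lim {ι : Type*} (U : Ultrafilter ι) (T : ι → H →L[ℂ] H)
    (hT : ∀ i, ‖T i‖ ≤ 1) : ∃ L, WLim (U : Filter ι) T L := by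
  have key : ∀ x y : H, ∃ c : ℂ, Tendsto (fun i => inner ℂ (T i x) y) U (𝓝 c) ∧
      ‖c‖ ≤ ‖x‖ * ‖y‖ := by
    intro x y
    have hb : ∀ i, inner ℂ (T i x) y ∈ Metric.closedBall (0 : ℂ) (‖x‖ * ‖y‖) := by
      intro i
      rw [mem_closedBall_zero_iff]
      refine (norm_inner_le_norm _ _).trans ?_
      gcongr
      exact (T i).le_of_opNorm_le (hT i) x |>.trans (by simp)
    obtain ⟨c, hc, hc'⟩ := (isCompact_closedBall (0 : ℂ) (‖x‖ * ‖y‖)).ultrafilter_le_nhds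
      (U.map fun i => inner ℂ (T i x) y) (by
        rw [Ultrafilter.coe_map, le_principal_iff, mem_map]
        exact Filter.univ_mem' hb)
    exact ⟨c, hc', by simpa using hc⟩
  choose B hB hBn using key
  let B' : H →L⋆[ℂ] H →L[ℂ] ℂ := LinearMap.mkContinuous₂
    (LinearMap.mk₂'ₛₗ (starRingEnd ℂ) (RingHom.id ℂ) B
      (fun x x' y => tendsto_nhds_unique (hB _ _) (by
        simpa [inner_add_left] using (hB x y).add (hB x' y)))
      (fun c x y => tendsto_nhds_unique (hB _ _) (by
        simpa [inner_smul_left, mul_comm] using (hB x y).const_mul ((starRingEnd ℂ) c)))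
      (fun x y y' => tendsto_nhds_unique (hB _ _) (by
        simpa [inner_add_right] using (hB x y).add (hB x y')))
      (fun c x y => tendsto_nhds_unique (hB _ _) (by
        simpa [inner_smul_right] using (hB x y).const_mul c)))
    1 (fun x y => by simpa using hBn x y)
  refine ⟨InnerProductSpace.continuousLinearMapOfBilin B', fun x y => ?_⟩
  rw [InnerProductSpace.continuousLinearMapOfBilin_apply]
  exact hB x y

end WLim

theorem mem_vn_iff (W : VonNeumannAlgebra H) (x : H →L[ℂ] H) :
    x ∈ W ↔ ∀ y ∈ W.commutant, y * x = x * y := by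
  conv_lhs => rw [← W.commutant_commutant]
  exact VonNeumannAlgebra.mem_commutant_iff

theorem polar_part (a : H →L[ℂ] H) :
    ∃ w : H →L[ℂ] H, w * (star w * w) = w ∧ w * CFC.abs a = a ∧ star w * a = CFC.abs a ∧
      (∀ y, Commute y a → Commute y (star a) → y * w = w * y) ∧
      (∀ y, y * a = 0 → y * w = 0) ∧ (∀ y, a * y = 0 → w * y = 0) := by
  set s := CFC.abs a with hs
  have s0 : 0 ≤ s := CFC.abs_nonneg a
  have ssa : IsSelfAdjoint s := IsSelfAdjoint.of_nonneg s0
  have ss : s * s = star a * a := CFC.abs_mul_abs a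
  let ε : ℕ → ℝ := fun n => 1 / ((n : ℝ) + 1)
  have ε0 : ∀ n, 0 < ε n := fun n => Nat.one_div_pos_of_nat
  let r : ℕ → H →L[ℂ] H := fun n => cfc (fun t : ℝ => (t + ε n)⁻¹) s
  have spec : ∀ t ∈ spectrum ℝ s, 0 ≤ t := fun t ht => spectrum_nonneg_of_nonneg s0 ht
  have cont : ∀ n, ContinuousOn (fun t : ℝ => (t + ε n)⁻¹) (spectrum ℝ s) := by
    intro n
    refine ContinuousOn.inv₀ (by fun_prop) fun t ht => ?_
    have := spec t ht
    have := ε0 n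
    positivity
  have rsa : ∀ n, star (r n) = r n := fun n => (cfc_predicate (p := IsSelfAdjoint) _ s).star_eq
  have sr : ∀ n, s * r n = cfc (fun t : ℝ => t * (t + ε n)⁻¹) s := by
    intro n
    rw [cfc_mul (fun t : ℝ => t) _ s (by fun_prop) (cont n), cfc_id' ℝ s]
  have rs : ∀ n, r n * s = s * r n := by
    intro n
    have := congrArg star (sr n)
    rw [star_mul, rsa, ssa.star_eq,
      (cfc_predicate (p := IsSelfAdjoint) (fun t : ℝ => t * (t + ε n)⁻¹) s).star_eq] at this
    rw [this, sr]
  have sre : ∀ n, s * r n = 1 - (ε n : ℂ) • r n := by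
    intro n
    rw [eq_sub_iff_add_eq, sr]
    have e1 : ((ε n : ℂ) • r n) = cfc (fun t : ℝ => ε n * (t + ε n)⁻¹) s := by
      rw [cfc_const_mul (ε n) _ s (cont n)]
      exact Complex.coe_smul _ _
    rw [e1, ← cfc_add (a := s) (fun t : ℝ => t * (t + ε n)⁻¹) (fun t : ℝ => ε n * (t + ε n)⁻¹)
      (by exact ContinuousOn.mul (by fun_prop) (cont n))
      (by exact ContinuousOn.mul (by fun_prop) (cont n)), ← cfc_one ℝ s]
    refine cfc_congr fun t ht => ?_
    have := spec t ht
    have := ε0 n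
    simp only [Pi.one_apply]
    field_simp
  have nsr : ∀ n, ‖s * r n‖ ≤ 1 := by
    intro n
    rw [sr]
    refine norm_cfc_le zero_le_one fun t ht => ?_
    have h1 := spec t ht
    have h2 := ε0 n
    rw [Real.norm_eq_abs, abs_of_nonneg (by positivity), ← div_eq_mul_inv]
    rw [div_le_one (by positivity)]
    linarith
  have nar : ∀ n, ‖a * r n‖ ≤ 1 := by
    intro n
    have h1 : star (a * r n) * (a * r n) = star (s * r n) * (s * r n) := by
      simp only [star_mul, rsa, ssa.star_eq, mul_assoc]
      rw [← mul_assoc (star a), ← ss, mul_assoc]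
    have h2 : ‖a * r n‖ * ‖a * r n‖ = ‖s * r n‖ * ‖s * r n‖ := by
      rw [← CStarRing.norm_star_mul_self, h1, CStarRing.norm_star_mul_self]
    have h3 := nsr n
    have h4 := norm_nonneg (s * r n)
    nlinarith [norm_nonneg (a * r n)]
  let U : Ultrafilter ℕ := Ultrafilter.of atTop
  have εlim : Tendsto ε (U : Filter ℕ) (𝓝 0) :=
    tendsto_one_div_add_atTop_nhds_zero_nat.mono_left (Ultrafilter.of_le atTop)
  obtain ⟨w, hw⟩ := WLim.exists_lim U (fun n => a * r n) nar
  -- `w s = a`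
  have ws : w * s = a := by
    refine (hw.mul_right s).unique (WLim.of_norm ?_)
    refine squeeze_zero (fun _ => norm_nonneg _) (fun n => ?_) εlim
    rw [mul_assoc, rs, sre, mul_sub, mul_one, sub_sub_cancel_left, norm_neg, mul_smul_comm,
      norm_smul, Complex.norm_real, Real.norm_eq_abs, abs_of_pos (ε0 n)]
    exact mul_le_of_le_one_right (ε0 n).le (nar n)
  -- `w* a = s`
  have wa : star w * a = s := by
    refine (hw.star_lim.mul_right a).unique (WLim.of_norm ?_)
    refine squeeze_zero (fun _ => norm_nonneg _) (fun n => ?_) εlim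
    rw [star_mul, rsa, mul_assoc, ← ss, ← mul_assoc, rs, sre, sub_mul, one_mul,
      sub_sub_cancel_left, norm_neg, smul_mul_assoc,
      norm_smul, Complex.norm_real, Real.norm_eq_abs, abs_of_pos (ε0 n), rs]
    exact mul_le_of_le_one_right (ε0 n).le (nsr n)
  have hp : WLim (U : Filter ℕ) (fun n => s * r n) (star w * w) :=
    (hw.mul_left (star w)).congr fun n => by rw [← mul_assoc, wa]
  have hwp : w * (star w * w) = w :=
    (hp.mul_left w).unique (hw.congr fun n => by rw [← mul_assoc, ws])
  refine ⟨w, hwp, ws, wa, ?_, ?_, ?_⟩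
  · intro y h1 h2
    refine hw.comm y fun n => ?_
    have h3 : Commute s y := Commute.cfcAbs_left h1.symm (by simpa using h2.star_star.symm)
    have h4 : Commute (r n) y := h3.cfc_real _
    calc y * (a * r n) = a * (y * r n) := by rw [← mul_assoc, h1.eq, mul_assoc]
      _ = a * r n * y := by rw [← h4.eq, mul_assoc]
  · intro y hy
    refine (hw.mul_left y).unique (WLim.of_eventually (Eventually.of_forall fun n => ?_))
    rw [← mul_assoc, hy, zero_mul]
  · intro y hy
    refine (hw.mul_right y).unique (WLim.of_eventually (Eventually.of_forall fun n => ?_))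
    have h1 : s * y = 0 := by rw [← wa, mul_assoc, hy, mul_zero]
    have h2 : (ε n : ℂ) • (r n * y) = y := by
      have := congrArg (fun t => t * y) (sre n)
      simp only [sub_mul, one_mul, smul_mul_assoc] at this
      rw [← rs, mul_assoc, h1, mul_zero] at this
      exact (sub_eq_zero.mp this.symm).symm
    have h3 : (ε n : ℂ) • (a * (r n * y)) = 0 := by
      rw [← mul_smul_comm, h2, hy]
    have h4 : (ε n : ℂ) ≠ 0 := by exact_mod_cast (ε0 n).ne'
    rw [mul_assoc]
    exact (smul_eq_zero.mp h3).resolve_left h4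

theorem half_step (h : H →L[ℂ] H) (h0 : 0 ≤ h) (h1 : h ≤ 1) :
    ∃ p : H →L[ℂ] H, star p = p ∧ p * p = p ∧ (∀ y, Commute y h → Commute y p) ∧
      0 ≤ 2 * h - p ∧ 2 * h - p ≤ 1 := by
  set k := 2 * h - 1 with hk
  have hsa : IsSelfAdjoint h := IsSelfAdjoint.of_nonneg h0
  have ksa : IsSelfAdjoint k := by
    rw [hk, two_mul]
    exact (hsa.add hsa).sub (IsSelfAdjoint.one _)
  have hpos : 0 ≤ k⁺ := CFC.posPart_nonneg k
  have hneg : 0 ≤ k⁻ := CFC.negPart_nonneg k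
  have hdec : k⁺ - k⁻ = k := CFC.posPart_sub_negPart k ksa
  have k1 : k ≤ 1 := by
    rw [hk, two_mul, sub_le_iff_le_add]; exact add_le_add h1 h1
  have k2 : -1 ≤ k := by
    rw [hk, two_mul, neg_le_sub_iff_le_add]
    exact le_add_of_nonneg_left (add_nonneg h0 h0)
  obtain ⟨w, hw, hws, hwa, hwc, -, hw0⟩ := polar_part (k⁺)
  rw [CFC.abs_of_nonneg _ hpos] at hws hwa
  set p := star w * w with hp
  have psa : star p = p := by rw [hp, star_mul, star_star]
  have pp : p * p = p := by rw [hp, mul_assoc, hw]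
  have ps : p * k⁺ = k⁺ := by rw [hp, mul_assoc, hws, hwa]
  have pn : p * k⁻ = 0 := by
    rw [hp, mul_assoc, hw0 _ (CFC.posPart_mul_negPart k), mul_zero]
  have possa : star (k⁺) = k⁺ := (IsSelfAdjoint.of_nonneg hpos).star_eq
  have negsa : star (k⁻) = k⁻ := (IsSelfAdjoint.of_nonneg hneg).star_eq
  have sp : k⁺ * p = k⁺ := by
    have := congrArg star ps
    rwa [star_mul, psa, possa] at this
  have np : k⁻ * p = 0 := by
    have := congrArg star pn
    rwa [star_mul, psa, negsa, star_zero] at this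
  -- compress `k ≤ 1` and `-1 ≤ k`
  have c1 : k⁺ ≤ p := by
    have := star_left_conjugate_le_conjugate k1 p
    rw [psa, mul_one, pp, ← hdec, mul_sub, sub_mul, ps, sp, pn, zero_mul, sub_zero] at this
    exact this
  have c2 : k⁻ ≤ 1 - p := by
    have := star_left_conjugate_le_conjugate k2 (1 - p)
    have e1 : star (1 - p) = 1 - p := by rw [star_sub, star_one, psa]
    have e2 : (1 - p) * -1 * (1 - p) = -(1 - p) := by
      simp only [mul_sub, sub_mul, mul_one, one_mul, mul_neg, neg_mul, pp]
      abel
    have e3 : (1 - p) * k * (1 - p) = -k⁻ := by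
      have e4 : (1 - p) * (k⁺ - k⁻) * (1 - p) = -k⁻ := by
        simp only [mul_sub, sub_mul, mul_one, one_mul, ps, sp, np, pn]
        simp
      rwa [hdec] at e4
    rw [e1, e2, e3] at this
    exact neg_le_neg_iff.mp this
  have e : 2 * h - p = k⁺ + ((1 - p) - k⁻) := by
    have : 2 * h = k⁺ - k⁻ + 1 := by rw [hdec, hk]; abel
    rw [this]; abel
  refine ⟨p, psa, pp, ?_, ?_, ?_⟩
  · intro y hy
    have hyk : Commute y k := by
      rw [hk, two_mul]
      exact (hy.add_right hy).sub_right (Commute.one_right y)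
    have hyp : Commute y (k⁺) := by
      rw [CFC.posPart_def]
      exact (hyk.symm.cfcₙ_real _).symm
    have h3 : Commute y w := hwc y hyp (by rw [possa]; exact hyp)
    have hyp' : Commute (star y) (k⁺) := by
      have := hyp.star_star
      rwa [possa] at this
    have h4 : Commute (star y) w := hwc _ hyp' (by rw [possa]; exact hyp')
    have h5 : Commute y (star w) := by simpa using h4.star_star
    exact h5.mul_right h3
  · rw [e]
    exact add_nonneg hpos (sub_nonneg.mpr c2)
  · have : 2 * h - p = 1 - ((p - k⁺) + k⁻) := by rw [e]; abel
    rw [this]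
    exact sub_le_self _ (add_nonneg (sub_nonneg.mpr c1) hneg)

theorem commute_of_projections (x h : H →L[ℂ] H) (h0 : 0 ≤ h) (h1 : h ≤ 1)
    (hx : ∀ p : H →L[ℂ] H, star p = p → p * p = p → (∀ y, Commute y h → Commute y p) →
      p * x = x * p) : h * x = x * h := by
  have key : ∀ n : ℕ, ∃ k : H →L[ℂ] H, 0 ≤ k ∧ k ≤ 1 ∧ (∀ y, Commute y h → Commute y k) ∧
      k * x - x * k = (2 : ℂ) ^ n • (h * x - x * h) := by
    intro n
    induction n with
    | zero => exact ⟨h, h0, h1, fun y hy => hy, by simp⟩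
    | succ n ih =>
      obtain ⟨k, k0, k1, kc, ke⟩ := ih
      obtain ⟨p, psa, pp, pc, p0, p1⟩ := half_step k k0 k1
      refine ⟨2 * k - p, p0, p1, fun y hy => ?_, ?_⟩
      · rw [two_mul]
        exact ((kc y hy).add_right (kc y hy)).sub_right (pc y (kc y hy))
      · have := hx p psa pp fun y hy => pc y (kc y hy)
        rw [pow_succ, mul_comm, mul_smul, ← ke, sub_mul, mul_sub, this, two_mul, two_smul]
        noncomm_ring
  by_contra hne
  have hpos : 0 < ‖h * x - x * h‖ := norm_pos_iff.mpr (sub_ne_zero.mpr hne)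
  obtain ⟨n, hn⟩ := pow_unbounded_of_one_lt (2 * ‖x‖ / ‖h * x - x * h‖) (one_lt_two)
  obtain ⟨k, k0, k1, -, ke⟩ := key n
  have kn : ‖k‖ ≤ 1 := by
    rw [CStarAlgebra.norm_le_one_iff_of_nonneg k k0]; exact k1
  have b1 : ‖k * x - x * k‖ ≤ 2 * ‖x‖ := by
    calc ‖k * x - x * k‖ ≤ ‖k * x‖ + ‖x * k‖ := norm_sub_le _ _
      _ ≤ ‖k‖ * ‖x‖ + ‖x‖ * ‖k‖ := add_le_add (norm_mul_le _ _) (norm_mul_le _ _)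
      _ ≤ 2 * ‖x‖ := by nlinarith [norm_nonneg x, norm_nonneg k]
  rw [ke, norm_smul, norm_pow, Complex.norm_ofNat] at b1
  rw [div_lt_iff₀ hpos] at hn
  linarith

theorem exists_partial_isometry (W : VonNeumannAlgebra H) (q : H →L[ℂ] H) (hq : q ∈ W)
    (qsa : star q = q) (qq : q * q = q)
    (hna : ¬ ∀ x ∈ W, ∀ y ∈ W, (q * x * q) * (q * y * q) = (q * y * q) * (q * x * q)) :
    ∃ w ∈ W, w ≠ 0 ∧ w * (star w * w) = w ∧ w * w = 0 ∧ q * w = w ∧ w * q = w := by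
  by_contra hcon
  apply hna
  intro x hx y hy
  set b := q * y * q with hb
  have bW : b ∈ W := mul_mem (mul_mem hq hy) hq
  have qb : q * b = b := by rw [hb, ← mul_assoc, ← mul_assoc, qq]
  have bq : b * q = b := by rw [hb, mul_assoc, qq]
  -- square-zero elements of the corner vanish
  have sq0 : ∀ a ∈ W, a * a = 0 → ∀ p : H →L[ℂ] H, p * a = a → a * p = 0 → q * a = a →
      a * q = a → a = 0 := by
    intro a ha aa p pa ap qa aq
    by_contra ha0
    obtain ⟨w, hw, hws, -, hwc, hl, hr⟩ := polar_part a
    refine hcon ⟨w, ?_, ?_, hw, ?_, ?_, ?_⟩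
    · rw [mem_vn_iff]
      intro z hz
      refine hwc z ?_ ?_
      · exact (mem_vn_iff W a).mp ha z hz
      · exact (mem_vn_iff W (star a)).mp (star_mem ha) z hz
    · rintro rfl
      rw [zero_mul] at hws
      exact ha0 hws.symm
    · have e1 := hl (1 - p) (by rw [sub_mul, one_mul, pa, sub_self])
      rw [sub_mul, one_mul, sub_eq_zero] at e1
      have e2 := hr p ap
      calc w * w = w * (p * w) := by rw [← e1]
        _ = 0 := by rw [← mul_assoc, e2, zero_mul]
    · have e1 := hl (1 - q) (by rw [sub_mul, one_mul, qa, sub_self])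
      rw [sub_mul, one_mul, sub_eq_zero] at e1
      exact e1.symm
    · have e1 := hr (1 - q) (by rw [mul_sub, mul_one, aq, sub_self])
      rw [mul_sub, mul_one, sub_eq_zero] at e1
      exact e1.symm
  have step1 : ∀ h ∈ W, Commute q h → 0 ≤ h → h ≤ 1 → h * b = b * h := by
    intro h hh hqh h0 h1
    refine commute_of_projections b h h0 h1 fun p psa pp pc => ?_
    have pW : p ∈ W := (mem_vn_iff W p).mpr fun z hz => pc z ((mem_vn_iff W h).mp hh z hz)
    have pq : q * p = p * q := pc q hqh
    have p'W : 1 - p ∈ W := sub_mem (one_mem W) pW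
    have pp1 : p * (1 - p) = 0 := by rw [mul_sub, mul_one, pp, sub_self]
    have pp2 : (1 - p) * p = 0 := by rw [sub_mul, one_mul, pp, sub_self]
    have pp3 : (1 - p) * (1 - p) = 1 - p := by rw [mul_sub, mul_one, pp2, sub_zero]
    have a1 : p * b * (1 - p) = 0 := by
      refine sq0 _ (mul_mem (mul_mem pW bW) p'W) ?_ p ?_ ?_ ?_ ?_
      · calc p * b * (1 - p) * (p * b * (1 - p)) = p * b * ((1 - p) * p) * (b * (1 - p)) := by
              simp only [mul_assoc]
          _ = 0 := by rw [pp2]; simp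
      · rw [← mul_assoc, ← mul_assoc, pp]
      · rw [mul_assoc, pp2, mul_zero]
      · rw [← mul_assoc, ← mul_assoc, pq, mul_assoc p, qb]
      · rw [mul_assoc, sub_mul, one_mul, ← pq, mul_sub, mul_sub, mul_assoc p b q, bq,
          ← mul_assoc (p * b) q p, mul_assoc p b q, bq, mul_one]
    have a2 : (1 - p) * b * p = 0 := by
      refine sq0 _ (mul_mem (mul_mem p'W bW) pW) ?_ (1 - p) ?_ ?_ ?_ ?_
      · calc (1 - p) * b * p * ((1 - p) * b * p) = (1 - p) * b * (p * (1 - p)) * (b * p) := by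
              simp only [mul_assoc]
          _ = 0 := by rw [pp1]; simp
      · rw [← mul_assoc, ← mul_assoc, pp3]
      · rw [mul_assoc, pp1, mul_zero]
      · rw [← mul_assoc, ← mul_assoc, mul_sub, mul_one, pq, sub_mul, sub_mul, qb, mul_assoc p q b,
          qb, sub_mul 1 p b, one_mul, sub_mul b]
      · rw [mul_assoc, ← pq, ← mul_assoc, mul_assoc (1 - p) b q, bq]
    rw [mul_sub, mul_one, sub_eq_zero] at a1
    rw [sub_mul, sub_mul, one_mul, sub_eq_zero] at a2
    rw [a1, a2]
  have step2 : ∀ h ∈ W, Commute q h → star h = h → h * b = b * h := by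
    intro h hh hqh hsa
    have hsa' : IsSelfAdjoint h := hsa
    have l1 : h ≤ algebraMap ℝ (H →L[ℂ] H) ‖h‖ := hsa'.le_algebraMap_norm_self
    have l2 : -(algebraMap ℝ (H →L[ℂ] H) ‖h‖) ≤ h := hsa'.neg_algebraMap_norm_le_self
    set c : ℝ := (2 * ‖h‖ + 1)⁻¹ with hc
    have c0 : 0 < c := by positivity
    set N := algebraMap ℝ (H →L[ℂ] H) ‖h‖ with hN
    have NW : N ∈ W := by
      rw [mem_vn_iff]; intro z _; exact (Algebra.commutes ‖h‖ z).symm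
    have cW : c • (h + N) ∈ W := by
      rw [mem_vn_iff]; intro z hz
      rw [mul_smul_comm, smul_mul_assoc, (mem_vn_iff W _).mp (add_mem hh NW) z hz]
    have := step1 (c • (h + N)) cW
      ((hqh.add_right (Algebra.commutes ‖h‖ q).symm).smul_right c)
      (smul_nonneg c0.le (by rw [← neg_le_iff_add_nonneg]; exact l2))
      (by
        have e1 : h + N ≤ algebraMap ℝ (H →L[ℂ] H) (2 * ‖h‖ + 1) := by
          rw [two_mul, add_assoc, map_add, map_add, map_one]
          refine add_le_add l1 (le_add_of_nonneg_right zero_le_one)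
        have e2 := smul_le_smul_of_nonneg_left e1 c0.le
        refine e2.trans (le_of_eq ?_)
        rw [Algebra.algebraMap_eq_smul_one, smul_smul, hc, inv_mul_cancel₀ (by positivity),
          one_smul])
    rw [smul_mul_assoc, mul_smul_comm] at this
    have := smul_right_injective _ c0.ne' this
    rw [add_mul, mul_add, (Algebra.commutes ‖h‖ b : N * b = b * N)] at this
    exact add_right_cancel this
  set a := q * x * q with ha
  have aW : a ∈ W := mul_mem (mul_mem hq hx) hq
  have qa : q * a = a := by rw [ha, ← mul_assoc, ← mul_assoc, qq]
  have aq : a * q = a := by rw [ha, mul_assoc, qq]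
  have qsa' : q * star a = star a := by
    have := congrArg star aq
    rwa [star_mul, qsa] at this
  have saq : star a * q = star a := by
    have := congrArg star qa
    rwa [star_mul, qsa] at this
  have s1 := step2 (a + star a) (add_mem aW (star_mem aW))
    (by show q * _ = _ * q; rw [mul_add, add_mul, qa, aq, qsa', saq])
    (by rw [star_add, star_star, add_comm])
  have IW : Complex.I • (a - star a) ∈ W := by
    rw [mem_vn_iff]; intro z hz
    rw [mul_smul_comm, smul_mul_assoc,
      (mem_vn_iff W _).mp (sub_mem aW (star_mem aW)) z hz]
  have s2 := step2 (Complex.I • (a - star a)) IW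
    (by show q * _ = _ * q
        rw [mul_smul_comm, smul_mul_assoc, mul_sub, sub_mul, qa, aq, qsa', saq])
    (by rw [star_smul, star_sub, star_star, Complex.star_def, Complex.conj_I, neg_smul, ← smul_neg,
      neg_sub])
  rw [smul_mul_assoc, mul_smul_comm] at s2
  have s2' := smul_right_injective _ Complex.I_ne_zero s2
  simp only [add_mul, mul_add, sub_mul, mul_sub] at s1 s2'
  have s3 : (2 : ℂ) • (a * b) = (2 : ℂ) • (b * a) := by
    have := congrArg₂ (· + ·) s1 s2'
    rw [two_smul, two_smul]
    calc a * b + a * b = a * b + star a * b + (a * b - star a * b) := by abel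
      _ = _ := by rw [this]; abel
  exact smul_right_injective _ (two_ne_zero) s3

end Halving

section Zorn

open Filter Topology

/-- Square-zero partial isometries in the corner `eWe`. -/
structure NilPI (W : VonNeumannAlgebra H) (e a : H →L[ℂ] H) : Prop where
  mem : a ∈ W
  pi : a * (star a * a) = a
  sq : a * a = 0
  el : e * a = a
  er : a * e = a

/-- Extension of partial isometries. -/
structure PExt (a b : H →L[ℂ] H) : Prop where
  r : b * (star a * a) = a
  l : a * (star a * b) = a

theorem pi_star {a : H →L[ℂ] H} (h : a * (star a * a) = a) : star a * (a * star a) = star a := by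
  have := congrArg star h
  rwa [star_mul, star_mul, star_star, mul_assoc] at this

theorem PExt.star_r {a b : H →L[ℂ] H} (h : PExt a b) : star a * (a * star b) = star a := by
  have := congrArg star h.r
  rwa [star_mul, star_mul, star_star, mul_assoc] at this

theorem PExt.star_l {a b : H →L[ℂ] H} (h : PExt a b) : star b * (a * star a) = star a := by
  have := congrArg star h.l
  rwa [star_mul, star_mul, star_star, mul_assoc] at this

/-- `b* a = a* a` -/
theorem PExt.c1 {a b : H →L[ℂ] H} (h : PExt a b) (ha : a * (star a * a) = a) :
    star b * a = star a * a := by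
  have := congrArg (· * a) h.star_l
  simp only [mul_assoc] at this
  rwa [ha] at this

/-- `a* b = a* a` -/
theorem PExt.c2 {a b : H →L[ℂ] H} (h : PExt a b) (ha : a * (star a * a) = a) :
    star a * b = star a * a := by
  have := congrArg star (h.c1 ha)
  simpa only [star_mul, star_star] using this

/-- `b a* = a a*` -/
theorem PExt.c3 {a b : H →L[ℂ] H} (h : PExt a b) (ha : a * (star a * a) = a) :
    b * star a = a * star a := by
  have := congrArg (· * star a) h.r
  simp only [mul_assoc] at this
  rwa [pi_star ha] at this

/-- `a b* = a a*` -/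
theorem PExt.c4 {a b : H →L[ℂ] H} (h : PExt a b) (ha : a * (star a * a) = a) :
    a * star b = a * star a := by
  have := congrArg star (h.c3 ha)
  rwa [star_mul, star_mul, star_star] at this

theorem PExt.trans {a b c : H →L[ℂ] H} (ha : a * (star a * a) = a)
    (h : PExt a b) (h' : PExt b c) : PExt a c := by
  constructor
  · calc c * (star a * a) = c * (star b * a) := by rw [h.c1 ha]
      _ = c * (star b * (b * (star a * a))) := by rw [h.r]
      _ = c * (star b * b) * (star a * a) := by simp only [mul_assoc]
      _ = a := by rw [h'.r, h.r]
  · calc a * (star a * c) = a * star a * c := by rw [mul_assoc]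
      _ = a * star b * c := by rw [h.c4 ha]
      _ = a * (star a * b) * star b * c := by rw [h.l]
      _ = a * (star a * (b * (star b * c))) := by simp only [mul_assoc]
      _ = a := by rw [h'.l, h.l]

theorem norm_pi {a : H →L[ℂ] H} (ha : a * (star a * a) = a) : ‖a‖ ≤ 1 := by
  have h1 : star (star a * a) * (star a * a) = star a * a := by
    rw [star_mul, star_star, mul_assoc, ha]
  have h2 := CStarRing.norm_star_mul_self (x := star a * a)
  rw [h1] at h2
  have h3 := CStarRing.norm_star_mul_self (x := a)
  have h4 : ‖star a * a‖ ≤ 1 := by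
    by_contra hc
    push Not at hc
    nlinarith
  rw [h3] at h4
  nlinarith [norm_nonneg a]

theorem nil_prod {W : VonNeumannAlgebra H} {e a b : H →L[ℂ] H} (ha : NilPI W e a)
    (hb : NilPI W e b) (h : PExt a b) : a * b = 0 ∧ b * a = 0 := by
  constructor
  · calc a * b = a * (star a * b) * b := by rw [h.l]
      _ = a * (star a * (b * b)) := by simp only [mul_assoc]
      _ = 0 := by rw [hb.sq]; simp
  · calc b * a = b * (b * (star a * a)) := by rw [h.r]
      _ = b * b * (star a * a) := by simp only [mul_assoc]
      _ = 0 := by rw [hb.sq]; simp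

theorem chain_bound (W : VonNeumannAlgebra H) (e : H →L[ℂ] H)
    (c : Set {a // NilPI W e a}) (hc : IsChain (fun a b => PExt a.1 b.1) c) :
    ∃ ub : {a // NilPI W e a}, ∀ a ∈ c, PExt a.1 ub.1 := by
  have refl : ∀ a : {a // NilPI W e a}, PExt a.1 a.1 := fun a => ⟨a.2.pi, a.2.pi⟩
  rcases c.eq_empty_or_nonempty with rfl | hne
  · exact ⟨⟨0, zero_mem W, by simp, by simp, by simp, by simp⟩, by simp⟩
  haveI : Nonempty c := hne.to_subtype
  let F : Filter c := ⨅ a : c, 𝓟 {b : c | PExt a.1.1 b.1.1}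
  have tot : ∀ a b : c, PExt a.1.1 b.1.1 ∨ PExt b.1.1 a.1.1 := by
    intro a b
    by_cases hab : a.1 = b.1
    · left; rw [hab]; exact refl _
    · exact hc a.2 b.2 hab
  have hF : NeBot F := by
    refine iInf_neBot_of_directed' ?_ fun a => ?_
    · intro a b
      rcases tot a b with h | h
      · refine ⟨b, ?_, le_refl _⟩
        exact principal_mono.mpr fun d hd => PExt.trans a.1.2.pi h hd
      · refine ⟨a, le_refl _, ?_⟩
        exact principal_mono.mpr fun d hd => PExt.trans b.1.2.pi h hd
    · exact principal_neBot_iff.mpr ⟨a, refl _⟩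
  let U : Ultrafilter c := Ultrafilter.of F
  have ev : ∀ a : c, ∀ᶠ b in (U : Filter c), PExt a.1.1 b.1.1 := by
    intro a
    have : {b : c | PExt a.1.1 b.1.1} ∈ F := mem_iInf_of_mem a (mem_principal_self _)
    exact Ultrafilter.of_le F this
  obtain ⟨w, hw⟩ := WLim.exists_lim U (fun b : c => b.1.1) fun b => norm_pi b.1.2.pi
  have ext : ∀ a : c, PExt a.1.1 w := by
    intro a
    constructor
    · refine (hw.mul_right _).unique (WLim.of_eventually ?_)
      filter_upwards [ev a] with b hb using hb.r
    · have h1 := (hw.mul_left (star a.1.1)).mul_left a.1.1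
      refine h1.unique (WLim.of_eventually ?_)
      filter_upwards [ev a] with b hb using hb.l
  have prod0 : ∀ a b : c, a.1.1 * b.1.1 = 0 := by
    intro a b
    rcases tot a b with h | h
    · exact (nil_prod a.1.2 b.1.2 h).1
    · exact (nil_prod b.1.2 a.1.2 h).2
  have zero_lim : WLim (U : Filter c) (fun _ => (0 : H →L[ℂ] H)) 0 :=
    WLim.of_eventually (Eventually.of_forall fun _ => rfl)
  refine ⟨⟨w, ?_, ?_, ?_, ?_, ?_⟩, fun a ha => ext ⟨a, ha⟩⟩
  · rw [mem_vn_iff]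
    intro y hy
    exact hw.comm y fun b => (mem_vn_iff W _).mp b.1.2.mem y hy
  · have h1 := (hw.mul_left (star w)).mul_left w
    refine h1.unique (hw.congr fun b => ?_)
    rw [(ext b).c1 b.1.2.pi, (ext b).r]
  · have h1 : ∀ a : c, a.1.1 * w = 0 := fun a =>
      (hw.mul_left a.1.1).unique (zero_lim.congr fun b => (prod0 a b).symm)
    exact (hw.mul_right w).unique (zero_lim.congr fun b => (h1 b).symm)
  · exact (hw.mul_left e).unique (hw.congr fun b => b.1.2.el.symm)
  · exact (hw.mul_right e).unique (hw.congr fun b => b.1.2.er.symm)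

theorem exists_halving (W : VonNeumannAlgebra H) (hW : IsContinuousVNA W)
    (e : H →L[ℂ] H) (he : e ∈ W) (esa : star e = e) (ee : e * e = e) :
    ∃ w, NilPI W e w ∧ w * star w + star w * w = e := by
  obtain ⟨⟨w, hw⟩, hmax⟩ := exists_maximal_of_chains_bounded
    (r := fun a b : {a // NilPI W e a} => PExt a.1 b.1) (chain_bound W e)
    (fun {a b c} h h' => PExt.trans a.2.pi h h')
  refine ⟨w, hw, ?_⟩
  have wp := hw.pi
  have wps := pi_star hw.pi
  have sqs : star w * star w = 0 := by rw [← star_mul, hw.sq, star_zero]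
  have els : star w * e = star w := by
    have := congrArg star hw.el
    rwa [star_mul, esa] at this
  have ers : e * star w = star w := by
    have := congrArg star hw.er
    rwa [star_mul, esa] at this
  set q := e - w * star w - star w * w with hq
  have qW : q ∈ W := sub_mem (sub_mem he (mul_mem hw.mem (star_mem hw.mem)))
    (mul_mem (star_mem hw.mem) hw.mem)
  have qsa : star q = q := by simp [hq, esa]
  have qw : q * w = 0 := by
    rw [hq, sub_mul, sub_mul, hw.el, mul_assoc, wp, mul_assoc, hw.sq]; simp
  have wq : w * q = 0 := by
    rw [hq, mul_sub, mul_sub, hw.er, wp, ← mul_assoc, hw.sq]; simp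
  have qws : q * star w = 0 := by
    have := congrArg star wq
    rwa [star_mul, qsa, star_zero] at this
  have wsq : star w * q = 0 := by
    have := congrArg star qw
    rwa [star_mul, qsa, star_zero] at this
  have eq : e * q = q := by
    rw [hq, mul_sub, mul_sub, ee, ← mul_assoc, hw.el, ← mul_assoc, ers]
  have qe : q * e = q := by
    have := congrArg star eq
    rwa [star_mul, qsa, esa] at this
  have qq : q * q = q := by
    conv_lhs => rw [hq, sub_mul, sub_mul, mul_assoc, mul_assoc, ← hq, eq, wsq, wq]
    simp
  have q0 : q = 0 := by
    refine hW q qW qsa qq ?_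
    by_contra hna
    obtain ⟨u, uW, u0, up, uu, qu, uq⟩ := exists_partial_isometry W q qW qsa qq hna
    have qus : q * star u = star u := by
      have := congrArg star uq
      rwa [star_mul, qsa] at this
    have usq : star u * q = star u := by
      have := congrArg star qu
      rwa [star_mul, qsa] at this
    have d1 : w * u = 0 := by rw [← qu, ← mul_assoc, wq, zero_mul]
    have d2 : u * w = 0 := by rw [← uq, mul_assoc, qw, mul_zero]
    have d3 : star w * u = 0 := by rw [← qu, ← mul_assoc, wsq, zero_mul]
    have d4 : u * star w = 0 := by rw [← uq, mul_assoc, qws, mul_zero]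
    have d5 : w * star u = 0 := by rw [← qus, ← mul_assoc, wq, zero_mul]
    have d6 : star u * w = 0 := by rw [← usq, mul_assoc, qw, mul_zero]
    have eu : e * u = u := by
      have := congrArg (· * u) eq
      simp only [mul_assoc] at this
      rwa [qu] at this
    have ue : u * e = u := by
      have := congrArg (u * ·) qe
      simp only [← mul_assoc] at this
      rwa [uq] at this
    have mm : star (w + u) * (w + u) = star w * w + star u * u := by
      rw [star_add, add_mul, mul_add, mul_add, d3, d6]; simp
    have hm : NilPI W e (w + u) := by
      refine ⟨add_mem hw.mem uW, ?_, ?_, ?_, ?_⟩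
      · rw [mm, add_mul, mul_add, mul_add, wp, up, ← mul_assoc w, d5, ← mul_assoc u, d4]; simp
      · rw [add_mul, mul_add, mul_add, hw.sq, uu, d1, d2]; simp
      · rw [mul_add, hw.el, eu]
      · rw [add_mul, hw.er, ue]
    have e1 : PExt w (w + u) := by
      constructor
      · rw [add_mul, wp, ← mul_assoc u, d4]; simp
      · rw [mul_add, mul_add, wp, d3]; simp
    have e2 := (hmax ⟨w + u, hm⟩ e1).r
    simp only at e2
    rw [mm, mul_add, wp, ← mul_assoc, d5, zero_mul, add_zero] at e2
    exact u0 (by simpa using e2)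
  rw [hq, sub_sub, sub_eq_zero] at q0
  exact q0.symm

end Zorn

/-! ### Part III: assembly -/

section Assembly

theorem conj_inner (J : H ≃ₗᵢ⋆[ℂ] H) (x y : H) : inner ℂ (J x) (J y) = inner ℂ y x := by
  rw [← inner_conj_symm y x, inner_eq_sum_norm_sq_div_four (𝕜 := ℂ) (J x) (J y),
    inner_eq_sum_norm_sq_div_four (𝕜 := ℂ) x y]
  have h1 : J x + J y = J (x + y) := by simp
  have h2 : J x - J y = J (x - y) := by simp
  have h3 : J x - Complex.I • J y = J (x + Complex.I • y) := by
    simp [map_smulₛₗ, sub_eq_add_neg]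
  have h4 : J x + Complex.I • J y = J (x - Complex.I • y) := by
    simp [map_smulₛₗ, sub_eq_add_neg]
  simp only [RCLike.I_to_complex, h1, h2, h3, h4, LinearIsometryEquiv.norm_map]
  simp only [map_div₀, map_add, map_sub, map_mul, map_pow, Complex.conj_I]
  simp only [Complex.coe_algebraMap, Complex.conj_ofReal, map_ofNat]
  ring

theorem transp_mul (J : H ≃ₗᵢ⋆[ℂ] H) (hJ : ∀ h : H, J (J h) = h) (x y : H →L[ℂ] H) :
    transp J (x * y) = transp J y * transp J x := by
  ext h
  show J (adjoint (x * y) (J h)) = J (adjoint y (J (J (adjoint x (J h)))))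
  rw [hJ, ← ContinuousLinearMap.star_eq_adjoint, star_mul]
  rfl

theorem transp_star (J : H ≃ₗᵢ⋆[ℂ] H) (hJ : ∀ h : H, J (J h) = h) (x : H →L[ℂ] H) :
    star (transp J x) = transp J (star x) := by
  rw [ContinuousLinearMap.star_eq_adjoint, ContinuousLinearMap.star_eq_adjoint]
  symm
  rw [ContinuousLinearMap.eq_adjoint_iff]
  intro u v
  show inner ℂ (J (adjoint (adjoint x) (J u))) v = inner ℂ u (J (adjoint x (J v)))
  rw [ContinuousLinearMap.adjoint_adjoint]
  have e1 := conj_inner J (x (J u)) (J v)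
  have e2 := conj_inner J (J u) (adjoint x (J v))
  rw [hJ] at e1 e2
  rw [e1, e2, ContinuousLinearMap.adjoint_inner_left]

theorem transp_transp (J : H ≃ₗᵢ⋆[ℂ] H) (hJ : ∀ h : H, J (J h) = h) (x : H →L[ℂ] H) :
    transp J (transp J x) = x := by
  ext h
  show J (adjoint (transp J x) (J h)) = x h
  rw [← ContinuousLinearMap.star_eq_adjoint, transp_star J hJ]
  show J (J (adjoint (star x) (J (J h)))) = x h
  rw [hJ, hJ, ContinuousLinearMap.star_eq_adjoint, ContinuousLinearMap.adjoint_adjoint]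

theorem transp_zero (J : H ≃ₗᵢ⋆[ℂ] H) : transp J (0 : H →L[ℂ] H) = 0 := (transpL J).map_zero

theorem transp_add (J : H ≃ₗᵢ⋆[ℂ] H) (x y : H →L[ℂ] H) :
    transp J (x + y) = transp J x + transp J y := (transpL J).map_add x y

theorem transp_smul (J : H ≃ₗᵢ⋆[ℂ] H) (c : ℂ) (x : H →L[ℂ] H) :
    transp J (c • x) = c • transp J x := (transpL J).map_smul c x

theorem tri_eq (x y z : H →L[ℂ] H) : tri x y z = x * (star y * z) := rfl

theorem transp_tri (J : H ≃ₗᵢ⋆[ℂ] H) (hJ : ∀ h : H, J (J h) = h) (x y z : H →L[ℂ] H) :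
    transp J (tri x y z) = tri (transp J z) (transp J y) (transp J x) := by
  rw [tri_eq, tri_eq, transp_mul J hJ, transp_mul J hJ, transp_star J hJ, mul_assoc]

theorem mem_corner {W : VonNeumannAlgebra H} {e : H →L[ℂ] H} (he : e ∈ W) (ee : e * e = e)
    (x : H →L[ℂ] H) : x ∈ corner W e ↔ x ∈ W ∧ e * x = x := by
  constructor
  · rintro ⟨y, hy, rfl⟩
    refine ⟨mul_mem he hy, ?_⟩
    show e * (e * y) = e * y
    rw [← mul_assoc, ee]
  · rintro ⟨h1, h2⟩
    exact ⟨x, h1, h2⟩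

theorem mem_cornerT {W : VonNeumannAlgebra H} {e : H →L[ℂ] H} (he : e ∈ W) (ee : e * e = e)
    (J : H ≃ₗᵢ⋆[ℂ] H) (hJ : ∀ h : H, J (J h) = h) (b : H →L[ℂ] H) :
    b ∈ cornerT W e J ↔ transp J b ∈ corner W e := by
  constructor
  · rintro ⟨y, hy, rfl⟩
    refine ⟨y, hy, ?_⟩
    show e * y = transp J (transp J y * transp J e)
    rw [← transp_mul J hJ, transp_transp J hJ]
  · intro h
    obtain ⟨h1, h2⟩ := (mem_corner he ee _).mp h
    refine ⟨transp J b, h1, ?_⟩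
    show transp J (transp J b) * transp J e = b
    rw [← transp_mul J hJ, h2, transp_transp J hJ]

theorem tri_mem_corner {W : VonNeumannAlgebra H} {e : H →L[ℂ] H} (he : e ∈ W) (ee : e * e = e)
    {x y z : H →L[ℂ] H} (hx : x ∈ corner W e) (hy : y ∈ corner W e) (hz : z ∈ corner W e) :
    tri x y z ∈ corner W e := by
  rw [mem_corner he ee] at *
  refine ⟨mul_mem hx.1 (mul_mem (star_mem hy.1) hz.1), ?_⟩
  rw [tri_eq, ← mul_assoc, hx.2]

theorem jtri_mem_corner {W : VonNeumannAlgebra H} {e : H →L[ℂ] H} (he : e ∈ W) (ee : e * e = e)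
    {x y z : H →L[ℂ] H} (hx : x ∈ corner W e) (hy : y ∈ corner W e) (hz : z ∈ corner W e) :
    jtri x y z ∈ corner W e :=
  Submodule.smul_mem _ _ (Submodule.add_mem _ (tri_mem_corner he ee hx hy hz)
    (tri_mem_corner he ee hz hy hx))

theorem halfUnits_of {W : VonNeumannAlgebra H} {e w : H →L[ℂ] H} (hw : NilPI W e w) :
    HalfUnits (w * star w) (star w * w) w (star w) := by
  have wp := hw.pi
  have wps := pi_star hw.pi
  have sq := hw.sq
  have sqs : star w * star w = 0 := by rw [← star_mul, hw.sq, star_zero]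
  constructor <;> first
    | simp [mul_assoc, wp, wps, sq, sqs]; done
    | skip
  · rw [mul_assoc, ← mul_assoc (star w), sqs]; simp
  · rw [mul_assoc, ← mul_assoc w, sq]; simp
  · rw [← mul_assoc, sq, zero_mul]
  · rw [← mul_assoc, sqs, zero_mul]

theorem HalfHom.combine {D R : Type*} [Ring D] [StarRing D] [Ring R] [StarRing R]
    {f g w v : D} {φ : D →+ R} (h : HalfHom f g w v φ) (a b c a' b' c' : D)
    (ha : f * a + g * a = a) (hb : f * b + g * b = b) (hc : f * c + g * c = c)
    (ha' : f * a' + g * a' = a') (hb' : f * b' + g * b' = b') (hc' : f * c' + g * c' = c')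
    (Z : R) (hZ : Z = HalfHom.Z f g w v φ) :
    (Z * φ a + (1 - Z) * φ a') * (star (Z * φ b + (1 - Z) * φ b') *
      (Z * φ c + (1 - Z) * φ c')) =
    Z * φ (a * (star b * c)) + (1 - Z) * φ (c' * (star b' * a')) := by
  have zs : star Z = Z := by rw [hZ]; exact h.Z_star
  have zz : Z * Z = Z := by rw [hZ]; exact h.Z_idem
  have zc : ∀ x y, f * x + g * x = x → f * y + g * y = y →
      Z * (φ x * star (φ y)) = φ x * star (φ y) * Z := by
    rw [hZ]; exact fun x y hx hy => h.Z_comm x y hx hy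
  have H1 := h.hom a b c ha hb hc
  have H2 := h.antihom c' b' a' hc' hb' ha'
  rw [← hZ] at H1 H2
  rw [H1, H2]
  set N := 1 - Z with hN
  have ns : star N = N := by rw [hN, star_sub, star_one, zs]
  have nn : N * N = N := by rw [hN, sub_mul, mul_sub, mul_sub, zz]; simp
  have zn : Z * N = 0 := by rw [hN, mul_sub, zz]; simp
  have nz : N * Z = 0 := by rw [hN, sub_mul, zz]; simp
  have nc : ∀ x y, f * x + g * x = x → f * y + g * y = y →
      N * (φ x * star (φ y)) = φ x * star (φ y) * N := by
    intro x y hx hy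
    rw [hN, sub_mul, mul_sub, zc x y hx hy]; simp
  have key : star (Z * φ b + N * φ b') * (Z * φ c + N * φ c') =
      star (φ b) * (Z * φ c) + star (φ b') * (N * φ c') := by
    rw [star_add, star_mul, star_mul, zs, ns, add_mul, mul_add, mul_add]
    have t1 : star (φ b) * Z * (Z * φ c) = star (φ b) * (Z * φ c) := by
      rw [mul_assoc, ← mul_assoc Z, zz]
    have t2 : star (φ b) * Z * (N * φ c') = 0 := by
      rw [mul_assoc, ← mul_assoc Z, zn, zero_mul, mul_zero]
    have t3 : star (φ b') * N * (Z * φ c) = 0 := by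
      rw [mul_assoc, ← mul_assoc N, nz, zero_mul, mul_zero]
    have t4 : star (φ b') * N * (N * φ c') = star (φ b') * (N * φ c') := by
      rw [mul_assoc, ← mul_assoc N, nn]
    rw [t1, t2, t3, t4]; simp
  rw [key, add_mul, mul_add, mul_add]
  have u1 : Z * φ a * (star (φ b) * (Z * φ c)) = Z * (φ a * (star (φ b) * φ c)) := by
    calc Z * φ a * (star (φ b) * (Z * φ c)) = Z * (φ a * star (φ b)) * Z * φ c := by
          simp only [mul_assoc]
      _ = Z * (Z * (φ a * star (φ b))) * φ c := by
          rw [mul_assoc Z _ Z, ← zc a b ha hb]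
      _ = _ := by rw [← mul_assoc Z Z, zz]; simp only [mul_assoc]
  have u2 : Z * φ a * (star (φ b') * (N * φ c')) = 0 := by
    calc Z * φ a * (star (φ b') * (N * φ c')) = Z * (φ a * star (φ b') * N) * φ c' := by
          simp only [mul_assoc]
      _ = Z * N * (φ a * star (φ b') * φ c') := by
          rw [← nc a b' ha hb']; simp only [mul_assoc]
      _ = 0 := by rw [zn, zero_mul]
  have u3 : N * φ a' * (star (φ b) * (Z * φ c)) = 0 := by
    calc N * φ a' * (star (φ b) * (Z * φ c)) = N * (φ a' * star (φ b) * Z) * φ c := by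
          simp only [mul_assoc]
      _ = N * Z * (φ a' * star (φ b) * φ c) := by
          rw [← zc a' b ha' hb]; simp only [mul_assoc]
      _ = 0 := by rw [nz, zero_mul]
  have u4 : N * φ a' * (star (φ b') * (N * φ c')) = N * (φ a' * (star (φ b') * φ c')) := by
    calc N * φ a' * (star (φ b') * (N * φ c')) = N * (φ a' * star (φ b')) * N * φ c' := by
          simp only [mul_assoc]
      _ = N * (N * (φ a' * star (φ b'))) * φ c' := by
          rw [mul_assoc N _ N, ← nc a' b' ha' hb']
      _ = _ := by rw [← mul_assoc N N, nn]; simp only [mul_assoc]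
  rw [u1, u2, u3, u4]; simp

/-- There is a Hilbert space into which both spaces embed isometrically; this turns
the operator space into a sub-TRO of a `C*`-algebra. -/
theorem exists_embedding (K' H' : Type) [NormedAddCommGroup K'] [InnerProductSpace ℂ K']
    [CompleteSpace K'] [NormedAddCommGroup H'] [InnerProductSpace ℂ H'] [CompleteSpace H'] :
    ∃ (R : Type) (_ : Ring R) (_ : StarRing R) (_ : Module ℂ R) (j : (K' →L[ℂ] H') →ₗ[ℂ] R),
      Function.Injective j ∧
      ∀ x y z, j (tri x y z) = j x * (star (j y) * j z) := by
  let E := WithLp 2 (K' × H')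
  let iK : K' →L[ℂ] E :=
    ((WithLp.prodContinuousLinearEquiv 2 ℂ K' H').symm : (K' × H') →L[ℂ] E) ∘L
      ContinuousLinearMap.inl ℂ K' H'
  let iH : H' →L[ℂ] E :=
    ((WithLp.prodContinuousLinearEquiv 2 ℂ K' H').symm : (K' × H') →L[ℂ] E) ∘L
      ContinuousLinearMap.inr ℂ K' H'
  have hK : adjoint iK ∘L iK = 1 := by
    rw [← ContinuousLinearMap.norm_map_iff_adjoint_comp_self]
    intro x
    exact WithLp.norm_toLp_fst 2 K' H' x
  have hH : adjoint iH ∘L iH = 1 := by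
    rw [← ContinuousLinearMap.norm_map_iff_adjoint_comp_self]
    intro x
    exact WithLp.norm_toLp_snd 2 K' H' x
  have hK' : ∀ x, adjoint iK (iK x) = x := fun x => DFunLike.congr_fun hK x
  have hH' : ∀ x, adjoint iH (iH x) = x := fun x => DFunLike.congr_fun hH x
  let j : (K' →L[ℂ] H') →ₗ[ℂ] (E →L[ℂ] E) :=
    { toFun := fun x => iH ∘L x ∘L adjoint iK
      map_add' := fun x y => by ext1 t; simp
      map_smul' := fun c x => by ext1 t; simp }
  refine ⟨E →L[ℂ] E, inferInstance, inferInstance, inferInstance, j, ?_, ?_⟩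
  · intro x y hxy
    ext1 t
    have h1 : iH (x (adjoint iK (iK t))) = iH (y (adjoint iK (iK t))) :=
      DFunLike.congr_fun hxy (iK t)
    rw [hK'] at h1
    rw [← hH' (x t), h1, hH']
  · intro x y z
    have hs : star (j y) = iK ∘L adjoint y ∘L adjoint iH := by
      rw [ContinuousLinearMap.star_eq_adjoint]
      show adjoint (iH ∘L y ∘L adjoint iK) = _
      rw [ContinuousLinearMap.adjoint_comp, ContinuousLinearMap.adjoint_comp,
        ContinuousLinearMap.adjoint_adjoint]
      rfl
    rw [hs]
    ext1 t
    show iH (x (adjoint y (z (adjoint iK t)))) =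
      iH (x (adjoint iK (iK (adjoint y (adjoint iH (iH (z (adjoint iK t))))))))
    rw [hK', hH']

end Assembly

theorem universal_part (W : VonNeumannAlgebra H)
    (e : H →L[ℂ] H) (he : e ∈ W) (ee : e * e = e)
    (J : H ≃ₗᵢ⋆[ℂ] H) (hJ : ∀ h : H, J (J h) = h)
    (w : H →L[ℂ] H) (hw : NilPI W e w) (hwe : w * star w + star w * w = e)
    (K' H' : Type) [NormedAddCommGroup K'] [InnerProductSpace ℂ K'] [CompleteSpace K']
    [NormedAddCommGroup H'] [InnerProductSpace ℂ H'] [CompleteSpace H']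
    (S : Submodule ℂ (K' →L[ℂ] H')) (hS : IsTRO S)
    (π : ↥(corner W e) →ₗ[ℂ] (K' →L[ℂ] H')) (hπS : ∀ x, π x ∈ S)
    (hπ : ∀ (x y z : ↥(corner W e)) (h : jtri (x : H →L[ℂ] H) y z ∈ corner W e),
      π ⟨jtri (x : H →L[ℂ] H) y z, h⟩ = jtri (π x) (π y) (π z)) :
    ∃ πt : ↥(envTRO W e J) →ₗ[ℂ] (K' →L[ℂ] H'),
      (∀ a, πt a ∈ S) ∧
      (∀ (a b c : ↥(envTRO W e J))
        (h : ptri (a : (H →L[ℂ] H) × (H →L[ℂ] H)) b c ∈ envTRO W e J),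
        πt ⟨ptri (a : (H →L[ℂ] H) × (H →L[ℂ] H)) b c, h⟩ = tri (πt a) (πt b) (πt c)) ∧
      (∀ (x : ↥(corner W e)) (hx : envMap W e J x ∈ envTRO W e J),
        πt ⟨envMap W e J x, hx⟩ = π x) := by
  obtain ⟨R, _, _, _, j, jinj, jtri'⟩ := exists_embedding K' H'
  have hu := halfUnits_of hw
  have swm : star w ∈ W := star_mem hw.mem
  let w' : W := ⟨w, hw.mem⟩
  let v' : W := ⟨star w, swm⟩
  let f' : W := ⟨w * star w, mul_mem hw.mem swm⟩
  let g' : W := ⟨star w * w, mul_mem swm hw.mem⟩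
  have hu' : HalfUnits f' g' w' v' := by
    constructor <;> apply Subtype.ext
    exacts [hu.sf, hu.sg, hu.sw, hu.sv, hu.ff, hu.gg, hu.fg, hu.gf, hu.fw, hu.wg, hu.wf, hu.gw,
      hu.gv, hu.vf, hu.fv, hu.vg, hu.ww, hu.vv, hu.wv, hu.vw]
  have emem : ∀ x : W, e * (x : H →L[ℂ] H) ∈ corner W e := fun x => ⟨x, x.2, rfl⟩
  let P : W →+ (K' →L[ℂ] H') :=
    { toFun := fun x => π ⟨e * x, emem x⟩
      map_zero' := by
        rw [← map_zero π]; congr 1; apply Subtype.ext; simp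
      map_add' := fun x y => by
        rw [← map_add π]; congr 1; apply Subtype.ext; simp [mul_add] }
  let φ : W →+ R := j.toAddMonoidHom.comp P
  have fix : ∀ x : W, f' * x + g' * x = x ↔ e * (x : H →L[ℂ] H) = x := by
    intro x
    rw [← hwe, add_mul]
    exact Subtype.ext_iff
  have P_of : ∀ (x : W) (hx : e * (x : H →L[ℂ] H) = x) (hx' : (x : H →L[ℂ] H) ∈ corner W e),
      P x = π ⟨x, hx'⟩ := by
    intro x hx hx'
    show π ⟨e * x, emem x⟩ = _
    congr 1; exact Subtype.ext hx
  have hφ : HalfHom f' g' w' v' φ := by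
    refine ⟨hu', fun r hr => ?_, fun x y z hx hy hz => ?_⟩
    · rw [← two_smul ℂ] at hr
      exact (smul_eq_zero.mp hr).resolve_left two_ne_zero
    · rw [fix] at hx hy hz
      have cx : (x : H →L[ℂ] H) ∈ corner W e := (mem_corner he ee _).mpr ⟨x.2, hx⟩
      have cy : (y : H →L[ℂ] H) ∈ corner W e := (mem_corner he ee _).mpr ⟨y.2, hy⟩
      have cz : (z : H →L[ℂ] H) ∈ corner W e := (mem_corner he ee _).mpr ⟨z.2, hz⟩
      have h1 := hπ ⟨x, cx⟩ ⟨y, cy⟩ ⟨z, cz⟩ (jtri_mem_corner he ee cx cy cz)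
      have h2 : P (x * (star y * z) + z * (star y * x)) =
          tri (P x) (P y) (P z) + tri (P z) (P y) (P x) := by
        rw [P_of x hx cx, P_of y hy cy, P_of z hz cz]
        have h3 := congrArg (fun t => (2 : ℂ) • t) h1
        simp only [jtri, smul_smul] at h3
        rw [mul_inv_cancel₀ two_ne_zero, one_smul] at h3
        rw [← h3, ← map_smul]
        show π ⟨_, _⟩ = _
        congr 1
        apply Subtype.ext
        show e * ((x : H →L[ℂ] H) * (star (y : H →L[ℂ] H) * z) +
          z * (star (y : H →L[ℂ] H) * x)) = (2 : ℂ) • ((2 : ℂ)⁻¹ • (tri (x : H →L[ℂ] H) y z +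
            tri (z : H →L[ℂ] H) y x))
        rw [smul_smul, mul_inv_cancel₀ two_ne_zero, one_smul, mul_add, ← mul_assoc e, hx,
          ← mul_assoc e, hz]
        rfl
      show j (P _) = j (P x) * (star (j (P y)) * j (P z)) + j (P z) * (star (j (P y)) * j (P x))
      rw [h2, map_add, jtri', jtri']
  let M : (K' →L[ℂ] H') →ₗ[ℂ] (K' →L[ℂ] H') :=
    { toFun := fun X => tri (P f') (P v') (tri (P g') (P w') X) +
        tri (P g') (P w') (tri (P f') (P v') X)
      map_add' := fun X Y => by
        ext1 t; simp [tri]; abel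
      map_smul' := fun c X => by
        ext1 t; simp [tri] }
  have PS : ∀ x, P x ∈ S := fun x => hπS _
  have MS : ∀ X ∈ S, M X ∈ S := fun X hX => S.add_mem
    (hS.2 _ (PS _) _ (PS _) _ (hS.2 _ (PS _) _ (PS _) _ hX))
    (hS.2 _ (PS _) _ (PS _) _ (hS.2 _ (PS _) _ (PS _) _ hX))
  set Z : R := HalfHom.Z f' g' w' v' φ with hZ
  have jM : ∀ X, j (M X) = Z * j X := by
    intro X
    show j (tri (P f') (P v') (tri (P g') (P w') X) +
        tri (P g') (P w') (tri (P f') (P v') X)) = _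
    rw [map_add, jtri', jtri', jtri', jtri', hZ, HalfHom.Z, add_mul]
    simp only [mul_assoc]
    rfl
  have tmem : ∀ b ∈ cornerT W e J, transp J b ∈ corner W e := fun b hb =>
    (mem_cornerT he ee J hJ b).mp hb
  let p1 : ↥(envTRO W e J) →ₗ[ℂ] ↥(corner W e) :=
    { toFun := fun a => ⟨a.1.1, a.2.1⟩
      map_add' := fun a b => rfl
      map_smul' := fun c a => rfl }
  let p2 : ↥(envTRO W e J) →ₗ[ℂ] ↥(corner W e) :=
    { toFun := fun a => ⟨transp J a.1.2, tmem _ a.2.2⟩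
      map_add' := fun a b => Subtype.ext (transp_add J a.1.2 b.1.2)
      map_smul' := fun c a => Subtype.ext (transp_smul J c a.1.2) }
  let πt : ↥(envTRO W e J) →ₗ[ℂ] (K' →L[ℂ] H') :=
    (M ∘ₗ π ∘ₗ p1) + (π ∘ₗ p2 - M ∘ₗ π ∘ₗ p2)
  have jπ : ∀ a, j (πt a) = Z * j (π (p1 a)) + (1 - Z) * j (π (p2 a)) := by
    intro a
    show j (M (π (p1 a)) + (π (p2 a) - M (π (p2 a)))) = _
    rw [map_add, map_sub, jM, jM, sub_mul, one_mul]
  let c : ↥(corner W e) → W := fun x => ⟨x.1, ((mem_corner he ee _).mp x.2).1⟩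
  have cfix : ∀ x, f' * c x + g' * c x = c x := fun x =>
    (fix _).mpr ((mem_corner he ee _).mp x.2).2
  have jc : ∀ x : ↥(corner W e), j (π x) = φ (c x) := by
    intro x
    show _ = j (P (c x))
    rw [P_of (c x) ((mem_corner he ee _).mp x.2).2 x.2]
  refine ⟨πt, fun a => ?_, fun a b d h => ?_, fun x hx => ?_⟩
  · exact S.add_mem (MS _ (hπS _)) (S.sub_mem (hπS _) (MS _ (hπS _)))
  · apply jinj
    rw [jtri', jπ, jπ, jπ, jπ, jc, jc, jc, jc, jc, jc, jc, jc]
    rw [hφ.combine _ _ _ _ _ _ (cfix _) (cfix _) (cfix _) (cfix _) (cfix _) (cfix _) Z hZ]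
    congr 3
    apply Subtype.ext
    show transp J (tri _ _ _) = _
    rw [transp_tri J hJ]
    rfl
  · apply jinj
    rw [jπ]
    have h1 : p1 ⟨envMap W e J x, hx⟩ = x := rfl
    have h2 : p2 ⟨envMap W e J x, hx⟩ = x := Subtype.ext (transp_transp J hJ x.1)
    rw [h1, h2, ← add_mul, add_sub_cancel, one_mul]

theorem generation_part (W : VonNeumannAlgebra H)
    (e : H →L[ℂ] H) (he : e ∈ W) (ee : e * e = e)
    (J : H ≃ₗᵢ⋆[ℂ] H) (hJ : ∀ h : H, J (J h) = h)
    (w : H →L[ℂ] H) (hw : NilPI W e w) (hwe : w * star w + star w * w = e)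
    (T : Submodule ℂ ((H →L[ℂ] H) × (H →L[ℂ] H)))
    (hT : ∀ a ∈ T, ∀ b ∈ T, ∀ c ∈ T, ptri a b c ∈ T)
    (hα : ∀ x, envMap W e J x ∈ T) : envTRO W e J ≤ T := by
  have hu := halfUnits_of hw
  have swm : star w ∈ W := star_mem hw.mem
  have hα' : ∀ x ∈ corner W e, (x, transp J x) ∈ T := fun x hx => hα ⟨x, hx⟩
  have ef : e * (w * star w) = w * star w := by rw [← mul_assoc, hw.el]
  have ev : e * star w = star w := by
    rw [← hwe, add_mul]
    have h1 := hu.fv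
    have h2 := hu.gv
    rw [h1, h2, zero_add]
  have eg : e * (star w * w) = star w * w := by rw [← mul_assoc, ev]
  have cw := hα' w ((mem_corner he ee _).mpr ⟨hw.mem, hw.el⟩)
  have cv := hα' (star w) ((mem_corner he ee _).mpr ⟨swm, ev⟩)
  have cf := hα' (w * star w) ((mem_corner he ee _).mpr ⟨mul_mem hw.mem swm, ef⟩)
  have cg := hα' (star w * w) ((mem_corner he ee _).mpr ⟨mul_mem swm hw.mem, eg⟩)
  have left : ∀ x ∈ corner W e, (x, (0 : H →L[ℂ] H)) ∈ T := by
    intro x hx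
    have cx := hα' x hx
    have h1 := T.add_mem (hT _ cf _ cv _ (hT _ cg _ cw _ cx)) (hT _ cg _ cw _ (hT _ cf _ cv _ cx))
    convert h1 using 1
    have ex := ((mem_corner he ee _).mp hx).2
    generalize hf : w * star w = f at *
    generalize hg : star w * w = g at *
    generalize hv : star w = v at *
    simp only [ptri, Prod.mk_add_mk]
    ext1
    · simp only [tri_eq, hu.sv, hv]
      have a1 : f * (w * (g * (v * x))) = f * x := by
        rw [← mul_assoc g, hu.gv, ← mul_assoc f, hu.fw, ← mul_assoc, hu.wv]
      have a2 : g * (v * (f * (w * x))) = g * x := by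
        rw [← mul_assoc f, hu.fw, ← mul_assoc g, hu.gv, ← mul_assoc, hu.vw]
      rw [a1, a2, ← add_mul, hwe, ex]
    · simp only [tri_eq, transp_star J hJ, hu.sv, hv, ← transp_mul J hJ]
      have b1 : x * v * g * w * f = 0 := by rw [mul_assoc x, hu.vg]; simp
      have b2 : x * w * f * v * g = 0 := by rw [mul_assoc x, hu.wf]; simp
      rw [b1, b2, transp_zero, add_zero]
  rintro ⟨a, b⟩ ⟨ha, hb⟩
  have hb' := (mem_cornerT he ee J hJ b).mp hb
  have h1 := T.sub_mem (hα' _ hb') (left _ hb')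
  rw [transp_transp J hJ] at h1
  have h2 := T.add_mem (left a ha) h1
  simpa using h2

/-- for a continuous von Neumann algebra `W`, a projection `e ∈ W` and a
conjugation `J` on `H`, the TRO `eW ⊕ W^t e^t` together with `α x = (x, x^t)` is a universal
enveloping TRO of the JC*-triple `eW`; that is, `T*(eW) = eW ⊕ W^t e^t`. -/
theorem universal_tro_of_corner
    (W : VonNeumannAlgebra H) (hW : IsContinuousVNA W)
    (e : H →L[ℂ] H) (he : e ∈ W) (heSA : IsSelfAdjoint e) (heIdem : e * e = e)
    (J : H ≃ₗᵢ⋆[ℂ] H) (hJ : ∀ h : H, J (J h) = h) :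
    -- `α` maps `eW` into `eW ⊕ W^t e^t` and is an injective triple homomorphism:
    (∀ x, envMap W e J x ∈ envTRO W e J) ∧
    Function.Injective (envMap W e J) ∧
    (∀ (x y z : ↥(corner W e)) (h : jtri (x : H →L[ℂ] H) y z ∈ corner W e),
      envMap W e J ⟨jtri (x : H →L[ℂ] H) y z, h⟩ =
        ((2 : ℂ)⁻¹ • (ptri (envMap W e J x) (envMap W e J y) (envMap W e J z) +
          ptri (envMap W e J z) (envMap W e J y) (envMap W e J x)))) ∧
    -- `α (eW)` generates `eW ⊕ W^t e^t` as a TRO: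
    (∀ T : Submodule ℂ ((H →L[ℂ] H) × (H →L[ℂ] H)),
      IsClosed (T : Set ((H →L[ℂ] H) × (H →L[ℂ] H))) →
      (∀ a ∈ T, ∀ b ∈ T, ∀ c ∈ T, ptri a b c ∈ T) →
      (∀ x, envMap W e J x ∈ T) → envTRO W e J ≤ T) ∧
    -- the universal property:
    (∀ (K' H' : Type) [NormedAddCommGroup K'] [InnerProductSpace ℂ K'] [CompleteSpace K']
      [NormedAddCommGroup H'] [InnerProductSpace ℂ H'] [CompleteSpace H'],
      ∀ S : Submodule ℂ (K' →L[ℂ] H'), IsTRO S →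
      ∀ π : ↥(corner W e) →ₗ[ℂ] (K' →L[ℂ] H'),
        (∀ x, π x ∈ S) →
        (∀ (x y z : ↥(corner W e)) (h : jtri (x : H →L[ℂ] H) y z ∈ corner W e),
          π ⟨jtri (x : H →L[ℂ] H) y z, h⟩ = jtri (π x) (π y) (π z)) →
        ∃ πt : ↥(envTRO W e J) →ₗ[ℂ] (K' →L[ℂ] H'),
          (∀ a, πt a ∈ S) ∧
          (∀ (a b c : ↥(envTRO W e J))
            (h : ptri (a : (H →L[ℂ] H) × (H →L[ℂ] H)) b c ∈ envTRO W e J),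
            πt ⟨ptri (a : (H →L[ℂ] H) × (H →L[ℂ] H)) b c, h⟩ = tri (πt a) (πt b) (πt c)) ∧
          (∀ (x : ↥(corner W e)) (hx : envMap W e J x ∈ envTRO W e J),
            πt ⟨envMap W e J x, hx⟩ = π x)) := by
  obtain ⟨w, hw, hwe⟩ := exists_halving W hW e he heSA heIdem
  refine ⟨fun x => ?_, fun x y hxy => ?_, fun x y z h => ?_, fun T _ hT hα => ?_, ?_⟩
  · refine ⟨x.2, (mem_cornerT he heIdem J hJ _).mpr ?_⟩
    have h1 : transp J (envMap W e J x).2 = x := transp_transp J hJ x.1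
    rw [h1]
    exact x.2
  · exact Subtype.ext (congrArg Prod.fst hxy)
  · refine Prod.ext rfl ?_
    show transp J (jtri (x : H →L[ℂ] H) y z) = (2 : ℂ)⁻¹ •
      (tri (transp J x) (transp J y) (transp J z) + tri (transp J z) (transp J y) (transp J x))
    rw [jtri, transp_smul, transp_add, transp_tri J hJ, transp_tri J hJ, add_comm]
  · exact generation_part W e he heIdem J hJ w hw hwe T hT hα
  · intro K' H' _ _ _ _ _ _ S hS π hπS hπ
    exact universal_part W e he heIdem J hJ w hw hwe K' H' S hS π hπS hπ
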